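/- arXiv:1001.2638 — 5 statements merged into one kernel-verified Lean document; each statement's English description precedes it below -/
import Mathlib

section
/- Let p be a prime with p ≡ 3 (mod 4) and let k be an integer not divisible by p. Then the Gaussian sum S(k,p) = Σ_{j=0}^{p-1} e^{2πi j² k / p} equals i · (k/p) · √p, where (k/p) is the Legendre symbol and i = √(-1). -/
open Complex Filter Topology

/-- Gaussian terms are summable. -/
lemma gs_summable {a : ℂ} (ha : 0 < a.re) :
    Summable (fun n : ℤ => cexp (-Real.pi * a * (n : ℂ) ^ 2)) := by
  have h := (summable_jacobiTheta₂_term_iff 0 (I * a)).2 (by simpa using ha)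
  refine h.congr fun n => ?_
  rw [jacobiTheta₂_term]
  congr 1
  linear_combination ((Real.pi : ℂ) * a * n ^ 2) * I_sq

lemma gs_norm (a : ℂ) (n : ℤ) :
    ‖cexp (-Real.pi * a * (n : ℂ) ^ 2)‖ = Real.exp (-Real.pi * a.re * (n : ℝ) ^ 2) := by
  rw [Complex.norm_exp]
  congr 1
  have : (-Real.pi * a * (n : ℂ) ^ 2) = ((-Real.pi * (n : ℝ) ^ 2 : ℝ) : ℂ) * a := by
    push_cast; ring
  rw [this, Complex.re_ofReal_mul]; ring

/-- Only the zero term survives. -/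
lemma gs_tail (w : ℤ → ℂ) (hw : ∀ n, ‖w n‖ ≤ 1) (hw0 : w 0 = 1) {l : Filter ℝ} (b : ℝ → ℂ)
    (hb : Tendsto (fun t => (b t).re) l atTop) :
    Tendsto (fun t => ∑' n : ℤ, w n * cexp (-Real.pi * b t * (n : ℂ) ^ 2)) l (𝓝 1) := by
  have h1 : ∑' n : ℤ, (if n = 0 then (1 : ℂ) else 0) = 1 := tsum_ite_eq 0 (fun _ => (1 : ℂ))
  rw [← h1]
  have hs : Summable (fun n : ℤ => ‖cexp (-Real.pi * (1 : ℂ) * (n : ℂ) ^ 2)‖) :=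
    (gs_summable (a := 1) (by simp)).norm
  refine tendsto_tsum_of_dominated_convergence hs ?_ ?_
  · intro n
    by_cases hn : n = 0
    · subst hn
      simpa [hw0] using tendsto_const_nhds
    · rw [if_neg hn]
      rw [tendsto_zero_iff_norm_tendsto_zero]
      have h2 : Tendsto (fun t => Real.exp (-Real.pi * (b t).re * (n : ℝ) ^ 2)) l (𝓝 0) := by
        apply Real.tendsto_exp_atBot.comp
        have hc : 0 < Real.pi * (n : ℝ) ^ 2 := by positivity
        have := (hb.const_mul_atTop hc)
        refine (tendsto_neg_atTop_atBot.comp this).congr fun t => ?_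
        simp only [Function.comp]; ring
      refine squeeze_zero (fun t => norm_nonneg _) (fun t => ?_) h2
      rw [norm_mul, gs_norm]
      exact mul_le_of_le_one_left (Real.exp_pos _).le (hw n)
  · filter_upwards [hb.eventually_ge_atTop 1] with t ht n
    rw [norm_mul, gs_norm, gs_norm]
    refine (mul_le_of_le_one_left (Real.exp_pos _).le (hw n)).trans ?_
    rw [Real.exp_le_exp, one_re]
    have hc : 0 ≤ Real.pi * (n : ℝ) ^ 2 := by positivity
    nlinarith

lemma gs_cpow {x : ℝ} (hx : 0 < x) {d : ℂ} (hd : d ≠ 0) (s : ℂ) :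
    ((x : ℂ) * d) ^ s = (x : ℂ) ^ s * d ^ s := by
  have hx' : (x : ℂ) ≠ 0 := by exact_mod_cast hx.ne'
  rw [Complex.cpow_def_of_ne_zero (mul_ne_zero hx' hd), Complex.cpow_def_of_ne_zero hx',
    Complex.cpow_def_of_ne_zero hd, Complex.log_ofReal_mul hx hd, ← Complex.exp_add,
    Complex.ofReal_log hx.le]
  congr 1
  ring

lemma gs_class (N : ℕ) (hN : 0 < N) (r : ℕ) {d : ℂ} (hd : 0 < d.re) :
    d ^ (1 / 2 : ℂ) * ∑' m : ℤ, cexp (-Real.pi * d * ((m : ℂ) * N + r) ^ 2) =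
      1 / N * ∑' n : ℤ, cexp (2 * Real.pi * I * r * n / N) *
        cexp (-Real.pi * (d⁻¹ / N ^ 2) * (n : ℂ) ^ 2) := by
  have hN' : (N : ℂ) ≠ 0 := by exact_mod_cast hN.ne'
  have hd0 : d ≠ 0 := by rintro rfl; simp at hd
  have hre : 0 < (((N ^ 2 : ℝ) : ℂ) * d).re := by
    rw [re_ofReal_mul]; positivity
  have key := Complex.tsum_exp_neg_quadratic hre (-d * N * r)
  have hsq : (((N ^ 2 : ℝ) : ℂ) * d) ^ (1 / 2 : ℂ) = N * d ^ (1 / 2 : ℂ) := by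
    have h0 : (((N ^ 2 : ℝ) : ℂ)) ^ (1 / 2 : ℂ) = N := by
      rw [one_div]
      push_cast
      exact Complex.sq_cpow_two_inv (by simpa using hN)
    rw [gs_cpow (by positivity) hd0, h0]
  have e1 : ∀ m : ℤ, cexp (-Real.pi * d * ((m : ℂ) * N + r) ^ 2) =
      cexp (-Real.pi * d * r ^ 2) * cexp (-Real.pi * (((N ^ 2 : ℝ) : ℂ) * d) * (m : ℂ) ^ 2 +
        2 * Real.pi * (-d * N * r) * m) := by
    intro m
    rw [← Complex.exp_add]
    congr 1
    push_cast
    ring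
  have e2 : ∀ n : ℤ, cexp (2 * Real.pi * I * r * n / N) *
        cexp (-Real.pi * (d⁻¹ / N ^ 2) * (n : ℂ) ^ 2) = cexp (-Real.pi * d * r ^ 2) *
      cexp (-Real.pi / (((N ^ 2 : ℝ) : ℂ) * d) * ((n : ℂ) + I * (-d * N * r)) ^ 2) := by
    intro n
    rw [← Complex.exp_add, ← Complex.exp_add]
    congr 1
    push_cast
    field_simp
    linear_combination (d ^ 2 * N ^ 2 * r ^ 2 : ℂ) * I_sq
  simp_rw [e1, e2]
  rw [tsum_mul_left, tsum_mul_left, key, hsq]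
  have hd2 : d ^ (1 / 2 : ℂ) ≠ 0 := by simp [Complex.cpow_eq_zero_iff, hd0]
  field_simp

lemma gs_limit (N : ℕ) (hN : 0 < N) (c : ℤ → ℂ) (hc : ∀ n, ‖c n‖ ≤ 1)
    (hper : ∀ (m : ℤ) (r : ℕ), c (m * N + r) = c r) {l : Filter ℝ} (d : ℝ → ℂ)
    (hd : ∀ᶠ t in l, 0 < (d t).re) (hd' : Tendsto (fun t => ((d t)⁻¹).re) l atTop) :
    Tendsto (fun t => (d t) ^ (1 / 2 : ℂ) * ∑' n : ℤ, c n * cexp (-Real.pi * d t * (n : ℂ) ^ 2)) l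
      (𝓝 (1 / N * ∑ r ∈ Finset.range N, c r)) := by
  have : NeZero N := ⟨hN.ne'⟩
  have hlim : ∀ r : ℕ, Tendsto (fun t => 1 / (N : ℂ) *
      ∑' n : ℤ, cexp (2 * Real.pi * I * r * n / N) *
        cexp (-Real.pi * ((d t)⁻¹ / N ^ 2) * (n : ℂ) ^ 2)) l (𝓝 (1 / (N : ℂ) * 1)) := by
    intro r
    refine (gs_tail _ ?_ ?_ _ ?_).const_mul _
    · intro n
      have : (2 * Real.pi * I * r * n / N : ℂ) = ((2 * Real.pi * r * n / N : ℝ) : ℂ) * I := by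
        push_cast; ring
      rw [this, Complex.norm_exp_ofReal_mul_I]
    · simp
    · have hc : 0 < ((N : ℝ) ^ 2)⁻¹ := by positivity
      refine (hd'.const_mul_atTop hc).congr fun t => ?_
      have : (d t)⁻¹ / (N : ℂ) ^ 2 = ((((N : ℝ) ^ 2)⁻¹ : ℝ) : ℂ) * (d t)⁻¹ := by
        push_cast; ring
      rw [this, re_ofReal_mul]
  have hsum := tendsto_finsetSum (Finset.range N) (fun r _ => (hlim r).const_mul (c r))
  have e : ∑ r ∈ Finset.range N, c r * (1 / (N : ℂ) * 1) = 1 / N * ∑ r ∈ Finset.range N, c r := by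
    rw [Finset.mul_sum]
    exact Finset.sum_congr rfl fun r _ => by ring
  rw [e] at hsum
  refine hsum.congr' ?_
  filter_upwards [hd] with t ht
  have hs : Summable (fun n : ℤ => c n * cexp (-Real.pi * d t * (n : ℂ) ^ 2)) := by
    refine Summable.of_norm_bounded (gs_summable ht).norm fun n => ?_
    rw [norm_mul]
    exact mul_le_of_le_one_left (norm_nonneg _) (hc n)
  have hs2 := ((Int.divModEquiv N).symm.summable_iff.2 hs)
  have hs3 := (Equiv.prodComm (Fin N) ℤ).summable_iff.2 hs2
  have hT : ∑' n : ℤ, c n * cexp (-Real.pi * d t * (n : ℂ) ^ 2) = _ :=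
    ((Int.divModEquiv N).symm.tsum_eq _).symm.trans
      (((Equiv.prodComm (Fin N) ℤ).tsum_eq _).symm.trans hs3.tsum_prod)
  rw [hT, tsum_fintype, Finset.sum_range, Finset.mul_sum]
  refine Finset.sum_congr rfl fun r _ => ?_
  rw [← gs_class N hN r ht, mul_left_comm, ← tsum_mul_left]
  congr 1
  refine tsum_congr fun m => ?_
  simp [Int.divModEquiv, hper]

lemma gs_one (p : ℕ) (h3 : p % 4 = 3) :
    ∑ j ∈ Finset.range p, cexp (2 * Real.pi * I * (j : ℂ) ^ 2 / p) = I * (Real.sqrt p : ℂ) := by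
  have hp : 0 < p := by omega
  have hp' : (p : ℂ) ≠ 0 := by exact_mod_cast hp.ne'
  have hpR : (0 : ℝ) < p := by exact_mod_cast hp
  set a : ℝ → ℂ := fun t => t - 2 * I / p with ha
  set c : ℝ → ℂ := fun t => -(I * p / 2) / a t with hcdef
  have hare : ∀ t, (a t).re = t := by
    intro t
    have : a t = (t : ℂ) + ((-2 / p : ℝ) : ℂ) * I := by simp only [ha]; push_cast; ring
    rw [this]; simp
  have haim : ∀ t, (a t).im = -2 / p := by
    intro t
    have : a t = (t : ℂ) + ((-2 / p : ℝ) : ℂ) * I := by simp only [ha]; push_cast; ring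
    rw [this]; simp
  have ha0 : ∀ t, a t ≠ 0 := by
    intro t h
    have := haim t
    rw [h, zero_im] at this
    exact (div_ne_zero (by norm_num) hpR.ne') this.symm
  have hainv : ∀ t, (a t)⁻¹ = t * c t + I * p / 2 := by
    intro t
    have := ha0 t
    simp only [hcdef]
    field_simp
    simp only [ha]
    field_simp
    linear_combination (2 : ℂ) * I_sq
  have hc0 : ∀ t, c t ≠ 0 := fun t =>
    div_ne_zero (neg_ne_zero.2 (div_ne_zero (mul_ne_zero I_ne_zero hp') two_ne_zero)) (ha0 t)
  have hdre : ∀ t : ℝ, 0 < t → 0 < ((t : ℂ) * c t).re := by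
    intro t ht
    have h1 : (t : ℂ) * c t = (a t)⁻¹ - ((p / 2 : ℝ) : ℂ) * I := by
      rw [hainv]; push_cast; ring
    rw [h1]
    have h2 : ((a t)⁻¹).re = t / normSq (a t) := by rw [Complex.inv_re, hare]
    have h3 : 0 < normSq (a t) := Complex.normSq_pos.2 (ha0 t)
    rw [Complex.sub_re, h2]
    simp
    positivity
  have hdinv : ∀ t : ℝ, 0 < t → (((t : ℂ) * c t)⁻¹).re = 4 / p ^ 2 * t⁻¹ := by
    intro t ht
    have ht' : (t : ℂ) ≠ 0 := by exact_mod_cast ht.ne'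
    have h1 : ((t : ℂ) * c t)⁻¹ = ((4 / p ^ 2 * t⁻¹ : ℝ) : ℂ) + ((2 / p : ℝ) : ℂ) * I := by
      simp only [hcdef]
      have := ha0 t
      refine inv_eq_of_mul_eq_one_right ?_
      · push_cast
        field_simp
        simp only [ha]
        field_simp
        linear_combination (-2 * p * t : ℂ) * I_sq
    rw [h1, add_re, re_ofReal_mul, ofReal_re, I_re, mul_zero, add_zero]
  have L1 := gs_limit p hp (fun n => cexp (2 * Real.pi * I * (n : ℂ) ^ 2 / p)) (by
      intro n
      have : (2 * Real.pi * I * (n : ℂ) ^ 2 / p : ℂ) =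
        ((2 * Real.pi * n ^ 2 / p : ℝ) : ℂ) * I := by push_cast; ring
      rw [this, Complex.norm_exp_ofReal_mul_I]) (by
      intro m r
      rw [Complex.exp_eq_exp_iff_exists_int]
      refine ⟨m ^ 2 * p + 2 * m * r, ?_⟩
      push_cast
      field_simp
      ring) (l := 𝓝[>] (0 : ℝ)) (fun t => (t : ℂ))
      (by filter_upwards [self_mem_nhdsWithin] with t ht; simpa using ht)
      (by
        refine tendsto_inv_nhdsGT_zero.congr fun t => ?_
        rw [← ofReal_inv, ofReal_re])
  have L2 := gs_limit 2 two_pos (fun n => cexp (-Real.pi * I * p * (n : ℂ) ^ 2 / 2)) (by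
      intro n
      have : (-Real.pi * I * p * (n : ℂ) ^ 2 / 2 : ℂ) =
        ((-Real.pi * p * n ^ 2 / 2 : ℝ) : ℂ) * I := by push_cast; ring
      rw [this, Complex.norm_exp_ofReal_mul_I]) (by
      intro m r
      rw [Complex.exp_eq_exp_iff_exists_int]
      refine ⟨-(p * (m ^ 2 + m * r)), ?_⟩
      push_cast
      ring) (l := 𝓝[>] (0 : ℝ)) (fun t => (t : ℂ) * c t)
      (by filter_upwards [self_mem_nhdsWithin] with t ht using hdre t ht)
      (by
        have h4 : (0 : ℝ) < 4 / p ^ 2 := by positivity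
        refine (tendsto_inv_nhdsGT_zero.const_mul_atTop h4).congr' ?_
        filter_upwards [self_mem_nhdsWithin] with t ht using (hdinv t ht).symm)
  have hacont : Tendsto a (𝓝[>] 0) (𝓝 (a 0)) := by
    have : Continuous a := by simp only [ha]; fun_prop
    exact (this.tendsto 0).mono_left nhdsWithin_le_nhds
  have hccont : Tendsto c (𝓝[>] 0) (𝓝 (c 0)) := tendsto_const_nhds.div hacont (ha0 0)
  have hsqrt : (Real.sqrt p : ℂ) ^ 2 = p := by
    rw [← ofReal_pow, Real.sq_sqrt hpR.le]; simp
  have hsp : (0 : ℝ) < Real.sqrt p := Real.sqrt_pos.2 hpR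
  have hsp' : (Real.sqrt p : ℂ) ≠ 0 := by exact_mod_cast hsp.ne'
  have hc00 : c 0 = ((p / 2 : ℝ) : ℂ) ^ 2 := by
    simp only [hcdef, ha]
    push_cast
    field_simp [I_ne_zero]
    ring
  have ha00 : a 0 = (((1 / Real.sqrt p : ℝ) : ℂ) * (1 - I)) ^ 2 := by
    simp only [ha]
    push_cast
    rw [mul_pow, div_pow, hsqrt]
    field_simp
    linear_combination -I_sq
  have hA : Tendsto (fun t => (a t) ^ (1 / 2 : ℂ)) (𝓝[>] 0)
      (𝓝 (((1 / Real.sqrt p : ℝ) : ℂ) * (1 - I))) := by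
    have h := hacont.cpow (tendsto_const_nhds (x := (1 / 2 : ℂ))) (Or.inr (by
      rw [haim]
      exact div_ne_zero (by norm_num) hpR.ne'))
    have h2 : (a 0) ^ (1 / 2 : ℂ) = ((1 / Real.sqrt p : ℝ) : ℂ) * (1 - I) := by
      rw [ha00, one_div (2 : ℂ)]
      apply Complex.sq_cpow_two_inv
      rw [re_ofReal_mul]
      simpa using hsp
    rwa [h2] at h
  have hC : Tendsto (fun t => (c t) ^ (1 / 2 : ℂ)) (𝓝[>] 0) (𝓝 ((p / 2 : ℝ) : ℂ)) := by
    have h := hccont.cpow (tendsto_const_nhds (x := (1 / 2 : ℂ))) (Or.inl (by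
      rw [hc00, ← ofReal_pow, ofReal_re]
      positivity))
    have h2 : (c 0) ^ (1 / 2 : ℂ) = ((p / 2 : ℝ) : ℂ) := by
      rw [hc00, one_div (2 : ℂ)]
      apply Complex.sq_cpow_two_inv
      rw [ofReal_re]
      positivity
    rwa [h2] at h
  have L3 := (L1.mul hC).mul hA
  have heq := tendsto_nhds_unique (L3.congr' (by
    filter_upwards [self_mem_nhdsWithin] with t ht
    have ht0 : (0 : ℝ) < t := ht
    have key := Complex.tsum_exp_neg_mul_int_sq (a := a t) (by rw [hare]; exact ht0)
    have e1 : ∀ n : ℤ, cexp (-Real.pi * a t * (n : ℂ) ^ 2) =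
        cexp (2 * Real.pi * I * (n : ℂ) ^ 2 / p) * cexp (-Real.pi * t * (n : ℂ) ^ 2) := by
      intro n
      rw [← Complex.exp_add]
      congr 1
      simp only [ha]
      ring
    have e2 : ∀ n : ℤ, cexp (-Real.pi / a t * (n : ℂ) ^ 2) =
        cexp (-Real.pi * I * p * (n : ℂ) ^ 2 / 2) * cexp (-Real.pi * (t * c t) * (n : ℂ) ^ 2) := by
      intro n
      rw [← Complex.exp_add]
      congr 1
      rw [div_eq_mul_inv, hainv]
      ring
    simp_rw [e1, e2] at key
    have ha2 : a t ^ (1 / 2 : ℂ) ≠ 0 := by simp [Complex.cpow_eq_zero_iff, ha0 t]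
    rw [key]
    show _ = ((t : ℂ) * c t) ^ (1 / 2 : ℂ) * _
    rw [gs_cpow ht0 (hc0 t), one_div (a t ^ (1 / 2 : ℂ))]
    linear_combination ((t : ℂ) ^ (1 / 2 : ℂ) * c t ^ (1 / 2 : ℂ) *
      ∑' n : ℤ, cexp (-Real.pi * I * p * (n : ℂ) ^ 2 / 2) *
        cexp (-Real.pi * (t * c t) * (n : ℂ) ^ 2)) * inv_mul_cancel₀ ha2)) L2
  have hexp : cexp (-Real.pi * I * p * (1 : ℂ) ^ 2 / 2) = I := by
    obtain ⟨q, hq⟩ : ∃ q : ℕ, p = 4 * q + 3 := ⟨p / 4, by omega⟩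
    have : (-Real.pi * I * p * (1 : ℂ) ^ 2 / 2) =
        Real.pi / 2 * I + ((-(q + 1) : ℤ) : ℂ) * (2 * Real.pi * I) := by
      rw [hq]; push_cast; ring
    rw [this, Complex.exp_add, Complex.exp_int_mul_two_pi_mul_I, Complex.exp_pi_div_two_mul_I]
    simp
  have h2 : ∑ r ∈ Finset.range 2, cexp (-Real.pi * I * p * (((r : ℕ) : ℤ) : ℂ) ^ 2 / 2) = 1 + I := by
    rw [Finset.sum_range_succ, Finset.sum_range_one]
    congr 1
    · simp
    · simpa using hexp
  rw [h2] at heq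
  simp only [Int.cast_natCast] at heq
  set G := ∑ j ∈ Finset.range p, cexp (2 * Real.pi * I * (j : ℂ) ^ 2 / p)
  push_cast at heq
  field_simp at heq
  have h1I : (1 - I : ℂ) ≠ 0 := by
    intro h
    have := congrArg Complex.re h
    simp at this
  apply mul_right_cancel₀ h1I
  linear_combination heq + (Real.sqrt p : ℂ) * I_sq

lemma gs_range (p : ℕ) [NeZero p] (f : ZMod p → ℂ) :
    ∑ j ∈ Finset.range p, f (j : ZMod p) = ∑ x : ZMod p, f x := by
  refine Finset.sum_bij' (fun j _ => (j : ZMod p)) (fun x _ => x.val) ?_ ?_ ?_ ?_ ?_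
  · simp
  · intro x _; simpa using ZMod.val_lt x
  · intro j hj; exact ZMod.val_cast_of_lt (Finset.mem_range.1 hj)
  · intro x _; simp
  · simp

lemma gs_sum_eq (p : ℕ) [Fact p.Prime] (hp2 : p ≠ 2) (k : ℤ) (hk : (k : ZMod p) ≠ 0) :
    ∑ j ∈ Finset.range p, cexp (2 * Real.pi * I * (j : ℂ) ^ 2 * (k : ℂ) / p) =
      gaussSum ((quadraticChar (ZMod p)).ringHomComp (Int.castRingHom ℂ))
        ((ZMod.stdAddChar (N := p)).mulShift (k : ZMod p)) := by
  have e : ∀ j : ℕ, cexp (2 * Real.pi * I * (j : ℂ) ^ 2 * (k : ℂ) / p) =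
      (fun x : ZMod p => ZMod.stdAddChar (N := p) ((k : ZMod p) * x ^ 2)) (j : ZMod p) := by
    intro j
    have := ZMod.stdAddChar_coe (N := p) (k * (j : ℤ) ^ 2)
    push_cast at this
    simp only [this]
    congr 1
    ring
  rw [Finset.sum_congr rfl (fun j _ => e j),
    gs_range p (fun x : ZMod p => ZMod.stdAddChar (N := p) ((k : ZMod p) * x ^ 2)),
    ← Finset.sum_fiberwise Finset.univ (fun x : ZMod p => x ^ 2), gaussSum]
  have h0 : ∑ a : ZMod p, ZMod.stdAddChar (N := p) ((k : ZMod p) * a) = 0 := by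
    have := AddChar.sum_mulShift (k : ZMod p) (ZMod.isPrimitive_stdAddChar p)
    rw [if_neg hk] at this
    simpa [mul_comm] using this
  rw [← sub_zero (∑ j : ZMod p, _), ← h0, ← Finset.sum_sub_distrib]
  refine Finset.sum_congr rfl fun a _ => ?_
  have hcard := quadraticChar_card_sqrts (F := ZMod p) (by rwa [ZMod.ringChar_zmod_n]) a
  have : ∑ x ∈ Finset.univ.filter (fun x : ZMod p => x ^ 2 = a), ZMod.stdAddChar (N := p) ((k : ZMod p) * x ^ 2)
      = ((quadraticChar (ZMod p) a + 1 : ℤ) : ℂ) * ZMod.stdAddChar (N := p) ((k : ZMod p) * a) := by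
    rw [← hcard, Finset.sum_congr rfl (g := fun _ => ZMod.stdAddChar (N := p) ((k : ZMod p) * a))]
    · rw [Finset.sum_const, nsmul_eq_mul]
      congr 2
      simp
    · intro x hx
      rw [(Finset.mem_filter.1 hx).2]
  rw [this, MulChar.ringHomComp_apply, AddChar.mulShift_apply]
  push_cast
  simp
  ring

theorem gauss_sum_three_mod_four (p : ℕ) [Fact p.Prime] (h3 : p % 4 = 3)
    (k : ℤ) (hk : ¬ (p : ℤ) ∣ k) :
    (∑ j ∈ Finset.range p,
        Complex.exp (2 * Real.pi * Complex.I * (j : ℂ) ^ 2 * (k : ℂ) / (p : ℂ)))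
      = Complex.I * (legendreSym p k : ℂ) * (Real.sqrt p : ℂ) := by
  have hp2 : p ≠ 2 := by rintro rfl; omega
  have hk' : (k : ZMod p) ≠ 0 := by rwa [Ne, ZMod.intCast_zmod_eq_zero_iff_dvd]
  have h1 := gs_sum_eq p hp2 1 (by simp)
  simp only [Int.cast_one, mul_one] at h1
  rw [gs_one p h3, AddChar.mulShift_one] at h1
  rw [gs_sum_eq p hp2 k hk']
  have h := gaussSum_mulShift ((quadraticChar (ZMod p)).ringHomComp (Int.castRingHom ℂ))
    (ZMod.stdAddChar (N := p)) (Units.mk0 (k : ZMod p) hk')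
  rw [← h1, MulChar.ringHomComp_apply, Units.val_mk0] at h
  have hl : (legendreSym p k : ℂ) ^ 2 = 1 := by exact_mod_cast legendreSym.sq_one p hk'
  change (legendreSym p k : ℂ) * _ = _ at h
  linear_combination (legendreSym p k : ℂ) * h -
    (gaussSum ((quadraticChar (ZMod p)).ringHomComp (Int.castRingHom ℂ))
        ((ZMod.stdAddChar (N := p)).mulShift (k : ZMod p))) * hl
end

section
/- Let p be a prime with p ≡ 3 (mod 4). Then T(p) = (p/2) · Σ_{k=1}^{p-1} (-1)^{k+1} (k/p), where (k/p) is the Legendre symbol. -/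
section helpers
open Polynomial Finset
noncomputable def Dop {R : Type*} [CommRing R] (f : R[X]) : R[X] := X * derivative f

lemma Dop_pow {R : Type*} [CommRing R] (m : ℕ) : ∀ h : R[X],
    (Dop^[m] ((X - 1) ^ m * h)).eval 1 = (m.factorial : R) * h.eval 1 := by
  induction m with
  | zero => intro h; simp
  | succ k ih =>
    intro h
    rw [Function.iterate_succ_apply]
    have : Dop ((X - 1) ^ (k+1) * h) = (X - 1)^k * (((k+1 : ℕ) : R[X]) * X * h + (X - 1) * X * derivative h) := by
      unfold Dop
      rw [derivative_mul, derivative_pow]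
      simp
      ring
    rw [this, ih, Nat.factorial_succ]
    simp
    ring

lemma Dop_sum {R ι : Type*} [CommRing R] (m : ℕ) (s : Finset ι) (c : ι → R) (e : ι → ℕ) :
    Dop^[m] (∑ i ∈ s, C (c i) * X ^ (e i)) = ∑ i ∈ s, C (c i * (e i : R) ^ m) * X ^ (e i) := by
  induction m with
  | zero => simp
  | succ k ih =>
    rw [Function.iterate_succ_apply', ih]
    unfold Dop
    rw [derivative_sum, Finset.mul_sum]
    refine Finset.sum_congr rfl fun i _ => ?_
    rw [derivative_C_mul_X_pow]
    rcases Nat.eq_zero_or_pos (e i) with h | h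
    · simp [h]
    · obtain ⟨n, hn⟩ : ∃ n, e i = n + 1 := ⟨e i - 1, by omega⟩
      rw [hn]
      simp
      ring

lemma key_poly (p m : ℕ) [hp : Fact p.Prime] (hm : p = 2 * m + 1) (ω : ℂ) (hω : IsPrimitiveRoot ω p)
    (e : ℤ) (h : ∑ j ∈ range p, (legendreSym p j : ℂ) * ω ^ (2 * j)
       = e * ∏ j ∈ range m, (ω ^ (j+1) - ω ^ (p - (j+1)))) :
    (-1 : ZMod p) = e * (m.factorial : ZMod p) ^ 2 := by
  set A : ℤ[X] := ∑ j ∈ range p, C (legendreSym p j) * X ^ (2 * j) with hA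
  set B : ℤ[X] := ∏ j ∈ range m, (X ^ (j+1) - X ^ (p - (j+1))) with hB
  have hdvd : cyclotomic p ℤ ∣ A - C e * B := by
    rw [cyclotomic_eq_minpoly hω hp.out.pos]
    refine minpoly.isIntegrallyClosed_dvd (hω.isIntegral hp.out.pos) ?_
    simp only [hA, hB, map_sub, map_mul, map_sum, map_prod, aeval_C, map_pow, aeval_X]
    simp only [algebraMap_int_eq, eq_intCast]
    rw [h, sub_self]
  obtain ⟨Q, hQ⟩ := hdvd
  have h2 := congrArg (Polynomial.map (Int.castRingHom (ZMod p))) hQ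
  have hcyc : cyclotomic p (ZMod p) = (X - 1) ^ (p - 1) := by
    have := cyclotomic_mul_prime_eq_pow_of_not_dvd (ZMod p) (p := p) (n := 1) hp.out.not_dvd_one
    simpa using this
  rw [Polynomial.map_mul, map_cyclotomic_int, hcyc, Polynomial.map_sub, Polynomial.map_mul] at h2
  have hA' : A.map (Int.castRingHom (ZMod p)) =
      ∑ j ∈ range p, C ((legendreSym p j : ℤ) : ZMod p) * X ^ (2 * j) := by
    simp [hA, Polynomial.map_sum]
  have hB' : B.map (Int.castRingHom (ZMod p)) = (X - 1) ^ m *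
      ∏ j ∈ range m, ((∑ i ∈ range (j+1), X ^ i) - ∑ i ∈ range (p - (j+1)), X ^ i) := by
    simp only [hB, Polynomial.map_prod, Polynomial.map_sub, Polynomial.map_pow, map_X]
    rw [← Finset.card_range m, ← Finset.prod_const, card_range, ← Finset.prod_mul_distrib]
    refine Finset.prod_congr rfl fun j _ => ?_
    rw [mul_sub, mul_geom_sum, mul_geom_sum]; ring
  have hm0 : 0 < m := by have := hp.out.two_le; omega
  have h3 : A.map (Int.castRingHom (ZMod p)) = (X - 1) ^ m * (C (e : ZMod p) *
      ∏ j ∈ range m, ((∑ i ∈ range (j+1), X ^ i) - ∑ i ∈ range (p - (j+1)), X ^ i)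
      + (X - 1) ^ m * Q.map (Int.castRingHom (ZMod p))) := by
    rw [hB'] at h2
    rw [sub_eq_iff_eq_add] at h2
    rw [h2, show p - 1 = m + m by omega]
    simp
    ring
  have h4 := Dop_pow m (C (e : ZMod p) *
      ∏ j ∈ range m, ((∑ i ∈ range (j+1), X ^ i) - ∑ i ∈ range (p - (j+1)), X ^ i)
      + (X - 1) ^ m * Q.map (Int.castRingHom (ZMod p)))
  rw [← h3, hA', Dop_sum] at h4
  have hL : (∑ j ∈ range p, C (((legendreSym p j : ℤ) : ZMod p) * ((2 * j : ℕ) : ZMod p) ^ m) * X ^ (2 * j)).eval 1 = - 2 ^ m := by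
    simp only [eval_finsetSum, eval_mul, eval_C, eval_pow, eval_X, one_pow, mul_one]
    have : ∀ j ∈ range p, (((legendreSym p j : ℤ) : ZMod p) * ((2 * j : ℕ) : ZMod p) ^ m) = if j = 0 then 0 else 2 ^ m := by
      intro j hj
      rw [legendreSym.eq_pow, show p / 2 = m by omega]
      split_ifs with h0
      · simp [h0, hm0.ne']
      · have hj0 : (j : ZMod p) ≠ 0 := by
          rw [Ne, ZMod.natCast_eq_zero_iff]
          intro hd
          have := Nat.le_of_dvd (by omega) hd
          simp at hj; omega
        have := ZMod.pow_card_sub_one_eq_one hj0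
        rw [show p - 1 = m + m by omega, pow_add] at this
        push_cast
        rw [mul_pow, mul_left_comm, this, mul_one]
    have hr : range p = range ((p - 1) + 1) := congrArg range (by omega)
    rw [Finset.sum_congr rfl this, hr, Finset.sum_range_succ']
    simp
    rw [Nat.cast_sub (by omega)]
    simp
  have hR : (∏ j ∈ range m, ((∑ i ∈ range (j+1), X ^ i) - ∑ i ∈ range (p - (j+1)), X ^ i) : (ZMod p)[X]).eval 1 = 2 ^ m * m.factorial := by
    rw [eval_prod, ← Finset.prod_range_add_one_eq_factorial]
    push_cast
    conv_rhs => rw [← Finset.card_range m, ← Finset.prod_const, card_range, ← Finset.prod_mul_distrib]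
    refine Finset.prod_congr rfl fun j hj => ?_
    have : j + 1 ≤ p := by simp at hj; omega
    simp [eval_finsetSum]
    rw [Nat.cast_sub this]
    simp
    ring
  rw [hL, eval_add, eval_mul, hR] at h4
  have h20 : (2 : ZMod p) ≠ 0 := by
    have := (ZMod.natCast_eq_zero_iff 2 p).not.mpr (fun hd => by have := Nat.le_of_dvd (by norm_num) hd; omega)
    simpa using this
  simp [hm0.ne'] at h4
  have := pow_ne_zero m h20
  apply mul_left_cancel₀ this
  linear_combination h4

lemma sum_zmod_range (p : ℕ) [NeZero p] {M : Type*} [AddCommMonoid M] (f : ZMod p → M) :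
    ∑ x : ZMod p, f x = ∑ j ∈ range p, f (j : ZMod p) := by
  refine Finset.sum_nbij' (fun x => x.val) (fun j => (j : ZMod p)) ?_ ?_ ?_ ?_ ?_
  · intro x _; simpa using ZMod.val_lt x
  · intro j _; simp
  · intro x _; simp
  · intro j hj; exact ZMod.val_cast_of_lt (by simpa using hj)
  · intro x _; simp

lemma half_prod {M : Type*} [CommMonoid M] (m : ℕ) (F : ℕ → M)
    (hF : ∀ j, j < m → F (2 * m - 1 - j) = F j) :
    ∏ j ∈ range (2 * m), F j = (∏ j ∈ range m, F j) ^ 2 := by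
  rw [two_mul, Finset.prod_range_add, pow_two]
  congr 1
  rw [← Finset.prod_range_reflect]
  refine Finset.prod_congr rfl fun j hj => ?_
  simp at hj
  rw [← hF j hj]
  congr 1; omega

lemma half_sum {M : Type*} [Semiring M] (m : ℕ) (F : ℕ → M) (h0 : F 0 = 0)
    (hF : ∀ j, j ≤ 2 * m + 1 → F (2 * m + 1 - j) = F j) :
    ∑ j ∈ range (2 * m + 1), F j = 2 * ∑ j ∈ Icc 1 m, F j := by
  have h1 : ∑ j ∈ Icc 1 m, F j = ∑ j ∈ range m, F (j + 1) := by
    rw [Finset.range_eq_Ico, Finset.sum_Ico_add' F 0 m 1]; rfl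
  rw [Finset.sum_range_succ', h0, add_zero, h1, two_mul m, Finset.sum_range_add, two_mul]
  congr 1
  rw [← Finset.sum_range_reflect]
  refine Finset.sum_congr rfl fun j hj => ?_
  simp at hj
  rw [← hF (j+1) (by omega)]
  congr 1; omega

lemma sin_prod (p m : ℕ) [hp : Fact p.Prime] (hm : p = 2 * m + 1) :
    ∏ j ∈ range m, (2 * Real.sin (Real.pi * (j + 1) / p)) = Real.sqrt p := by
  have hp0 : (0 : ℝ) < p := by exact_mod_cast hp.out.pos
  have hs : ∀ j < p - 1, 0 < Real.sin (Real.pi * (j + 1) / p) := by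
    intro j hj
    apply Real.sin_pos_of_pos_of_lt_pi
    · positivity
    · rw [div_lt_iff₀ hp0]
      have : (j : ℝ) + 1 < p := by exact_mod_cast (by omega : j + 1 < p)
      nlinarith [Real.pi_pos]
  symm
  rw [Real.sqrt_eq_iff_mul_self_eq_of_pos]
  · rw [← pow_two, ← half_prod]
    · have h := (Complex.isPrimitiveRoot_exp p hp.out.pos.ne')
      have h2 : ∏ j ∈ range (2 * m), (1 - Complex.exp (2 * Real.pi * Complex.I / p) ^ (j + 1)) = (p : ℂ) := by
        have := IsPrimitiveRoot.prod_one_sub_pow_eq_order (n := 2 * m) (by rw [← hm]; exact h)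
        rw [this, hm]; push_cast; rfl
      have h3 := congrArg norm h2
      rw [norm_prod] at h3
      simp only [Complex.norm_natCast] at h3
      refine Eq.trans ?_ h3
      refine Finset.prod_congr rfl fun j hj => ?_
      have hj' := hs j (by simp at hj; omega)
      rw [← Complex.exp_nat_mul, norm_sub_rev]
      have : ((j + 1 : ℕ) : ℂ) * (2 * Real.pi * Complex.I / p) = Complex.I * ((2 * (Real.pi * (j + 1) / p) : ℝ) : ℂ) := by
        push_cast; ring
      rw [this, Complex.norm_exp_I_mul_ofReal_sub_one]
      rw [Real.norm_eq_abs, mul_div_cancel_left₀ _ (two_ne_zero), abs_of_pos (by positivity)]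
    · intro j hj
      congr 1
      rw [← Real.sin_pi_sub]
      congr 1
      have : ((2 * m - 1 - j : ℕ) : ℝ) = p - 2 - j := by
        rw [eq_sub_iff_add_eq, eq_sub_iff_add_eq]
        exact_mod_cast (by omega : 2 * m - 1 - j + j + 2 = p)
      rw [this]; field_simp; ring
  · exact Finset.prod_pos fun j hj => mul_pos two_pos (hs j (by simp at hj; omega))

lemma B_value (p m : ℕ) [hp : Fact p.Prime] (hm : p = 2 * m + 1) (s : ℕ) (hs : m = 2 * s + 1)
   (ω : ℂ) (hω : ω = - Complex.exp (Real.pi * Complex.I / p)) (hω1 : ω ^ p = 1) :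
    ∏ j ∈ range m, (ω ^ (j+1) - ω ^ (p - (j+1))) = - Complex.I * Real.sqrt p := by
  have hp0 : (p : ℂ) ≠ 0 := by exact_mod_cast hp.out.pos.ne'
  have hterm : ∀ j ∈ range m, (ω ^ (j+1) - ω ^ (p - (j+1))) =
      ((-1) ^ (j + 1) * Complex.I) * ((2 * Real.sin (Real.pi * (j + 1) / p) : ℝ) : ℂ) := by
    intro j hj
    have hjp : j + 1 ≤ p := by simp at hj; omega
    have hω0 : ω ≠ 0 := by rw [hω]; simp
    have e1 : ω ^ (p - (j + 1)) = (ω ^ (j+1))⁻¹ := by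
      rw [pow_sub₀ _ hω0 hjp, hω1, one_mul]
    have e2 : ω ^ (j + 1) = (-1) ^ (j+1) * Complex.exp ((Real.pi * (j + 1) / p : ℂ) * Complex.I) := by
      rw [hω, neg_pow, ← Complex.exp_nat_mul]
      congr 2; push_cast; ring
    rw [e1, e2, mul_inv, ← Complex.exp_neg]
    have e3 : ((-1 : ℂ) ^ (j+1))⁻¹ = (-1) ^ (j+1) := by
      rw [← inv_pow]; norm_num
    rw [e3]
    push_cast
    rw [Complex.sin]
    have e4 : -(Real.pi * (j + 1) / p : ℂ) * Complex.I = -((Real.pi * (j + 1) / p : ℂ) * Complex.I) := by ring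
    rw [e4]
    linear_combination (-(-1:ℂ)^(j+1) * (Complex.exp (-((Real.pi * (j + 1) / p : ℂ) * Complex.I)) - Complex.exp ((Real.pi * (j + 1) / p : ℂ) * Complex.I))) * Complex.I_sq
  rw [Finset.prod_congr rfl hterm, Finset.prod_mul_distrib, ← Complex.ofReal_prod, sin_prod p m hm]
  congr 1
  rw [hs]
  clear hs hterm hm
  induction s with
  | zero => simp
  | succ k ih =>
    rw [show 2 * (k + 1) + 1 = 2 * k + 1 + 1 + 1 by ring, Finset.prod_range_succ, Finset.prod_range_succ, ih]
    have : ((-1 : ℂ)) ^ (2 * k) = 1 := by simp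
    simp only [pow_add, this]
    linear_combination Complex.I * Complex.I_sq

noncomputable def chiC (p : ℕ) [Fact p.Prime] : MulChar (ZMod p) ℂ :=
  (quadraticChar (ZMod p)).ringHomComp (Int.castRingHom ℂ)

lemma chiC_nat (p : ℕ) [Fact p.Prime] (j : ℕ) : chiC p (j : ZMod p) = (legendreSym p j : ℂ) := by
  simp [chiC, legendreSym, MulChar.ringHomComp]

lemma psi_nat (p : ℕ) [Fact p.Prime] (j : ℕ) :
    (ZMod.stdAddChar (j : ZMod p) : ℂ) = Complex.exp (2 * Real.pi * Complex.I * j / p) := by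
  have := ZMod.stdAddChar_coe (N := p) (j : ℤ)
  simpa using this

lemma gauss_value (p : ℕ) [hp : Fact p.Prime] (h3 : p % 4 = 3) :
    gaussSum (chiC p) (ZMod.stdAddChar : AddChar (ZMod p) ℂ) = Complex.I * Real.sqrt p := by
  obtain ⟨m, hm⟩ : ∃ m, p = 2 * m + 1 := ⟨p / 2, by omega⟩
  obtain ⟨s, hs⟩ : ∃ s, m = 2 * s + 1 := ⟨m / 2, by omega⟩
  have hp0 : (p : ℂ) ≠ 0 := by exact_mod_cast hp.out.pos.ne'
  have hchar : ringChar (ZMod p) ≠ 2 := by rw [ZMod.ringChar_zmod_n]; omega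
  have hsq : gaussSum (chiC p) (ZMod.stdAddChar : AddChar (ZMod p) ℂ) ^ 2 = -p := by
    rw [gaussSum_sq (χ := chiC p)]
    · have : chiC p (-1) = -1 := by
        have := quadraticChar_neg_one hchar
        rw [ZMod.card, ZMod.χ₄_nat_three_mod_four h3] at this
        have h2 : chiC p (-1) = ((quadraticChar (ZMod p) (-1) : ℤ) : ℂ) := rfl
        rw [h2, this]; simp
      rw [this, ZMod.card]; ring
    · intro h
      have h1 := quadraticChar_ne_one hchar
      apply h1
      exact (MulChar.ringHomComp_eq_one_iff (f := Int.castRingHom ℂ) Int.cast_injective).mp h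
    · exact (quadraticChar_isQuadratic (ZMod p)).comp _
    · exact ZMod.isPrimitive_stdAddChar p
  set ω : ℂ := - Complex.exp (Real.pi * Complex.I / p) with hω
  have hωsq : ω ^ 2 = Complex.exp (2 * Real.pi * Complex.I / p) := by
    rw [hω, neg_sq, ← Complex.exp_nat_mul]; congr 1; push_cast; ring
  have hω1 : ω ^ p = 1 := by
    have hodd : Odd p := ⟨m, hm⟩
    rw [hω, hodd.neg_pow, ← Complex.exp_nat_mul, mul_div_cancel₀ _ hp0, Complex.exp_pi_mul_I]; simp
  have hprim : IsPrimitiveRoot ω p := by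
    have h := (Complex.isPrimitiveRoot_exp p hp.out.pos.ne')
    have e : ω = Complex.exp (2 * Real.pi * Complex.I / p) ^ (m + 1) := by
      rw [← hωsq, ← pow_mul, show 2 * (m + 1) = p + 1 by omega, pow_succ, hω1, one_mul]
    rw [e]
    apply h.pow_of_coprime
    rw [Nat.coprime_comm, Nat.Prime.coprime_iff_not_dvd hp.out]
    intro hd
    have := Nat.le_of_dvd (by omega) hd
    omega
  have hB := B_value p m hm s hs ω hω hω1
  have hG : gaussSum (chiC p) (ZMod.stdAddChar : AddChar (ZMod p) ℂ) =
      ∑ j ∈ range p, (legendreSym p j : ℂ) * ω ^ (2 * j) := by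
    unfold gaussSum
    rw [sum_zmod_range]
    refine Finset.sum_congr rfl fun j _ => ?_
    rw [chiC_nat, psi_nat, pow_mul, hωsq, ← Complex.exp_nat_mul]
    congr 2; ring
  have hsp : ((Real.sqrt p : ℝ) : ℂ) ^ 2 = p := by
    rw [← Complex.ofReal_pow, Real.sq_sqrt (by positivity)]; simp
  have hfac : (gaussSum (chiC p) (ZMod.stdAddChar : AddChar (ZMod p) ℂ) - Complex.I * Real.sqrt p) *
     (gaussSum (chiC p) (ZMod.stdAddChar : AddChar (ZMod p) ℂ) + Complex.I * Real.sqrt p) = 0 := by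
    linear_combination hsq - Complex.I ^ 2 * hsp - p * Complex.I_sq
  rcases mul_eq_zero.mp hfac with h | h
  · exact sub_eq_zero.mp h
  · exfalso
    have := key_poly p m hm ω hprim 1 (by
      rw [← hG, hB]; push_cast; linear_combination h)
    refine ZMod.mod_four_ne_three_of_sq_eq_neg_one (p := p) (y := (m.factorial : ZMod p)) ?_ h3
    rw [this]; simp

lemma sum_sq (p : ℕ) [hp : Fact p.Prime] (h3 : p % 4 = 3) (k : ℕ) (hk : (k : ZMod p) ≠ 0) :
    ∑ x : ZMod p, (ZMod.stdAddChar ((k : ZMod p) * x ^ 2) : ℂ) = legendreSym p k * (Complex.I * Real.sqrt p) := by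
  have hchar : ringChar (ZMod p) ≠ 2 := by rw [ZMod.ringChar_zmod_n]; omega
  set ψ : AddChar (ZMod p) ℂ := ZMod.stdAddChar with hψ
  have h1 : ∑ x : ZMod p, ψ ((k : ZMod p) * x ^ 2) = ∑ a : ZMod p, (chiC p a + 1) * ψ ((k : ZMod p) * a) := by
    rw [← Finset.sum_fiberwise (s := univ) (g := fun x : ZMod p => x ^ 2)]
    refine Finset.sum_congr rfl fun a _ => ?_
    rw [Finset.sum_congr rfl (g := fun _ => ψ ((k : ZMod p) * a))]
    · rw [Finset.sum_const, nsmul_eq_mul]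
      congr 1
      have := quadraticChar_card_sqrts hchar a
      have h2 : chiC p a + 1 = ((quadraticChar (ZMod p) a + 1 : ℤ) : ℂ) := by
        simp [chiC, MulChar.ringHomComp]
      rw [h2, ← this]
      simp
    · intro x hx
      simp at hx
      rw [hx]
  rw [h1]
  simp only [add_mul, one_mul, Finset.sum_add_distrib]
  have hu : ∑ a : ZMod p, ψ ((k : ZMod p) * a) = 0 := by
    have := AddChar.sum_mulShift (ψ := ψ) (k : ZMod p) (ZMod.isPrimitive_stdAddChar p)
    rw [if_neg hk, Nat.cast_zero] at this
    rw [← this]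
    refine Finset.sum_congr rfl fun a _ => by rw [mul_comm]
  rw [hu, add_zero]
  have := gaussSum_mulShift (chiC p) ψ (Units.mk0 _ hk)
  rw [gauss_value p h3, Units.val_mk0, chiC_nat] at this
  rw [← this, ← mul_assoc]
  have hl : (legendreSym p k : ℂ) * legendreSym p k = 1 := by
    have := legendreSym.sq_one p (a := k) (by simpa using hk)
    rw [← pow_two]; exact_mod_cast this
  rw [hl, one_mul]
  rfl

lemma sum_sin (p m : ℕ) [hp : Fact p.Prime] (hm : p = 2 * m + 1) (h3 : p % 4 = 3) (k : ℕ) (hk : (k : ZMod p) ≠ 0) :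
    2 * ∑ n ∈ Icc 1 m, Real.sin (2 * k * (Real.pi * (n : ℝ) ^ 2 / p)) = legendreSym p k * Real.sqrt p := by
  have hp0 : (p : ℝ) ≠ 0 := by exact_mod_cast hp.out.pos.ne'
  have h := sum_sq p h3 k hk
  rw [sum_zmod_range] at h
  have h' := congrArg Complex.im h
  rw [Complex.im_sum] at h'
  rw [← half_sum]
  · rw [← hm]
    convert h' using 1
    · refine Finset.sum_congr rfl fun n _ => ?_
      have : (k : ZMod p) * (n : ZMod p) ^ 2 = ((k * n ^ 2 : ℕ) : ZMod p) := by push_cast; rfl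
      rw [this, psi_nat]
      rw [← Complex.exp_ofReal_mul_I_im]
      congr 2
      push_cast; ring
    · have : (legendreSym p k : ℂ) * (Complex.I * Real.sqrt p) = ((legendreSym p k * Real.sqrt p : ℝ) : ℂ) * Complex.I := by
        push_cast; ring
      rw [this]; simp
  · simp
  · intro j hj
    rw [← hm] at hj ⊢
    rw [Nat.cast_sub hj]
    have : 2 * k * (Real.pi * ((p : ℝ) - j) ^ 2 / p) = 2 * k * (Real.pi * (j : ℝ) ^ 2 / p) + ((k * (p - 2 * j) : ℤ) : ℝ) * (2 * Real.pi) := by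
      push_cast; field_simp; ring
    rw [this, Real.sin_add_int_mul_two_pi]

lemma tan_expand (p m : ℕ) (hm : p = 2 * m + 1) (a : ℕ) :
    Real.tan (Real.pi * a / p) = ∑ k ∈ Icc 1 (p - 1), (-1 : ℝ) ^ (k + 1) * Real.sin (2 * k * (Real.pi * a / p)) := by
  have hp0 : (p : ℝ) ≠ 0 := by exact_mod_cast (by omega : p ≠ 0)
  set θ := Real.pi * a / p with hθ
  have hc : Real.cos θ ≠ 0 := by
    rw [Real.cos_ne_zero_iff]
    intro k hk
    rw [hθ, div_eq_div_iff hp0 two_ne_zero] at hk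
    have h1 : (2 * a : ℝ) = (2 * k + 1) * p := by
      apply mul_left_cancel₀ Real.pi_ne_zero; linarith
    have h2 : (2 * a : ℤ) = (2 * k + 1) * p := by exact_mod_cast h1
    rw [hm] at h2
    push_cast at h2
    have h3 : (2 : ℤ) * (a - (2 * k * m + k + m)) = 1 := by linear_combination h2
    omega
  have tel : ∀ N : ℕ, 2 * (∑ k ∈ range N, (-1 : ℝ) ^ (k + 1 + 1) * Real.sin (2 * (k + 1 : ℕ) * θ)) * Real.cos θ =
      Real.sin θ - (-1) ^ N * Real.sin ((2 * N + 1) * θ) := by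
    intro N
    induction N with
    | zero => simp
    | succ n ih =>
      rw [Finset.sum_range_succ, mul_add, add_mul, ih]
      have e1 : (2 * (n : ℝ) + 1) * θ = 2 * (n + 1 : ℕ) * θ - θ := by push_cast; ring
      have e2 : (2 * ((n + 1 : ℕ) : ℝ) + 1) * θ = 2 * (n + 1 : ℕ) * θ + θ := by ring
      rw [e1, e2, Real.sin_sub, Real.sin_add]
      ring
  have h1 : ∑ k ∈ Icc 1 (p - 1), (-1 : ℝ) ^ (k + 1) * Real.sin (2 * k * θ) =
     ∑ k ∈ range (p - 1), (-1 : ℝ) ^ (k + 1 + 1) * Real.sin (2 * (k + 1 : ℕ) * θ) := by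
    rw [Finset.range_eq_Ico, Finset.sum_Ico_add' (fun k : ℕ => (-1 : ℝ) ^ (k + 1) * Real.sin (2 * k * θ)) 0 (p-1) 1]; rfl
  rw [h1, Real.tan_eq_sin_div_cos, div_eq_iff hc]
  have t := tel (p - 1)
  have e : (-1 : ℝ) ^ (p - 1) = 1 := by rw [hm]; simp
  have e2 : (2 * ((p - 1 : ℕ) : ℝ) + 1) * θ = -θ + (a : ℤ) * (2 * Real.pi) := by
    rw [Nat.cast_sub (by omega), hθ]; push_cast; field_simp; ring
  rw [e, e2, Real.sin_add_int_mul_two_pi, Real.sin_neg] at t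
  linarith

end helpers


/-- `T p = √p ∑_{n=1}^{(p-1)/2} tan(π n² / p)`. -/
noncomputable def T (p : ℕ) : ℝ :=
  Real.sqrt p * ∑ n ∈ Finset.Icc 1 ((p - 1) / 2), Real.tan (Real.pi * (n : ℝ) ^ 2 / p)

theorem T_eq_half_p_alternating_legendre_sum (p : ℕ) [Fact p.Prime] (h3 : p % 4 = 3) :
    T p = ((p : ℝ) / 2) *
      ∑ k ∈ Finset.Icc 1 (p - 1), (-1 : ℝ) ^ (k + 1) * (legendreSym p (k : ℤ) : ℝ) := by
  have hp : p.Prime := Fact.out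
  obtain ⟨m, hm⟩ : ∃ m, p = 2 * m + 1 := ⟨p / 2, by omega⟩
  unfold T
  have e1 : ∀ n : ℕ, Real.tan (Real.pi * (n : ℝ) ^ 2 / p) =
      ∑ k ∈ Finset.Icc 1 (p - 1), (-1 : ℝ) ^ (k + 1) * Real.sin (2 * k * (Real.pi * (n : ℝ) ^ 2 / p)) := by
    intro n
    have := tan_expand p m hm (n ^ 2)
    push_cast at this
    exact this
  rw [Finset.sum_congr rfl (fun n _ => e1 n), Finset.sum_comm, show (p - 1) / 2 = m by omega,
    Finset.mul_sum, Finset.mul_sum]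
  refine Finset.sum_congr rfl fun k hk => ?_
  rw [← Finset.mul_sum]
  have hk0 : (k : ZMod p) ≠ 0 := by
    rw [Ne, ZMod.natCast_eq_zero_iff]
    intro hd
    simp at hk
    have := Nat.le_of_dvd (by omega) hd
    omega
  have h := sum_sin p m hm h3 k hk0
  have hs : Real.sqrt p * Real.sqrt p = p := Real.mul_self_sqrt (by positivity)
  linear_combination (Real.sqrt p * (-1) ^ (k+1) / 2) * h + ((-1) ^ (k+1) * (legendreSym p k : ℝ) / 2) * hs
end

section
/- Let p be a prime with p ≡ 3 (mod 4). Let q_o(p) and q_e(p) be, respectively, the number of odd and even quadratic residues mod p in the set {1, 2, …, p-1}. Then T(p) = p · (q_o(p) − q_e(p)). -/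
/-- The number of odd quadratic residues mod `p` in `{1, 2, …, p-1}`. -/
def qo (p : ℕ) : ℕ :=
  ((Finset.Icc 1 (p - 1)).filter
    (fun k => Odd k ∧ ∃ x ∈ Finset.range p, x * x % p = k % p)).card

/-- The number of even quadratic residues mod `p` in `{1, 2, …, p-1}`. -/
def qe (p : ℕ) : ℕ :=
  ((Finset.Icc 1 (p - 1)).filter
    (fun k => Even k ∧ ∃ x ∈ Finset.range p, x * x % p = k % p)).card


open Polynomial in
theorem aux_sum_range (p : ℕ) [NeZero p] {M : Type*} [AddCommMonoid M] (f : ZMod p → M) :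
    ∑ j ∈ Finset.range p, f (j : ZMod p) = ∑ x : ZMod p, f x := by
  refine Finset.sum_bij' (fun j _ => (j : ZMod p)) (fun x _ => x.val) ?_ ?_ ?_ ?_ ?_
  · simp
  · intro x _; simpa using ZMod.val_lt x
  · intro j hj; exact ZMod.val_cast_of_lt (by simpa using hj)
  · intro x _; simp
  · simp

open Polynomial in
theorem aux_sum_poly (p m : ℕ) [Fact p.Prime] (hm : p = 2 * m + 1) :
    ∑ x : ZMod p, x ^ m * (descPochhammer (ZMod p) m).eval x = -1 := by
  have hp := (Fact.out : p.Prime)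
  have hd : (descPochhammer (ZMod p) m).natDegree = m := descPochhammer_natDegree _ m
  have hc : (descPochhammer (ZMod p) m).coeff m = 1 := by
    have := monic_descPochhammer (ZMod p) m
    rw [Monic, leadingCoeff, hd] at this
    exact this
  simp_rw [eval_eq_sum_range, hd, Finset.mul_sum]
  rw [Finset.sum_comm, Finset.sum_range_succ]
  have h1 : ∀ i ∈ Finset.range m, ∑ x : ZMod p,
      x ^ m * ((descPochhammer (ZMod p) m).coeff i * x ^ i) = 0 := by
    intro i hi
    rw [Finset.mem_range] at hi
    have : ∀ x : ZMod p, x ^ m * ((descPochhammer (ZMod p) m).coeff i * x ^ i)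
        = (descPochhammer (ZMod p) m).coeff i * x ^ (m + i) := by intro x; ring
    simp_rw [this, ← Finset.mul_sum]
    rw [FiniteField.sum_pow_lt_card_sub_one, mul_zero]
    rw [ZMod.card]; omega
  rw [Finset.sum_eq_zero h1, zero_add, hc]
  have h2 : ∀ x : ZMod p, x ^ m * (1 * x ^ m) = if x = 0 then 0 else 1 := by
    intro x
    split_ifs with hx
    · have : m ≠ 0 := by rintro rfl; exact hp.one_lt.ne' (by omega)
      simp [hx, this]
    · rw [one_mul, ← pow_add, ← ZMod.pow_card_sub_one_eq_one hx]; congr 1; omega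
  simp_rw [h2]
  have : ∀ x : ZMod p, (if x = 0 then (0 : ZMod p) else 1) = 1 - if x = 0 then 1 else 0 := by
    intro x; split_ifs <;> simp
  simp_rw [this, Finset.sum_sub_distrib]
  simp

open Polynomial in
theorem aux_cyc (p : ℕ) [Fact p.Prime] :
    cyclotomic p (ZMod p) = (X - 1) ^ (p - 1) := by
  have hp := (Fact.out : p.Prime)
  have h := cyclotomic_prime_mul_X_sub_one (ZMod p) p
  have h2 : (X ^ p - 1 : (ZMod p)[X]) = (X - 1) ^ (p - 1) * (X - 1) := by
    rw [← pow_succ, Nat.sub_add_cancel hp.one_le, sub_pow_char, one_pow]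
  rw [h2] at h
  exact mul_right_cancel₀ (by simpa using X_sub_C_ne_zero (1 : ZMod p)) h

open Polynomial in
theorem aux_key (p m : ℕ) [Fact p.Prime] (hm : p = 2 * m + 1) (ζ : ℂ)
    (hζ : IsPrimitiveRoot ζ p) (ε : ℤ)
    (h : ∑ j ∈ Finset.range p, ((quadraticChar (ZMod p) (j : ZMod p) : ℤ) : ℂ) * ζ ^ j
      = ε * ∏ k ∈ Finset.range m, (ζ ^ (p - (k + 1)) * (ζ ^ (2 * (k + 1)) - 1))) :
    (ε : ZMod p) * 2 ^ m * (m.factorial : ZMod p) ^ 2 = -1 := by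
  have hp := (Fact.out : p.Prime)
  have hm0 : 0 < m := by
    rcases Nat.eq_zero_or_pos m with h | h
    · subst h; exact absurd hm hp.one_lt.ne'
    · exact h
  set F : ℤ[X] := ∑ j ∈ Finset.range p, C (quadraticChar (ZMod p) (j : ZMod p) : ℤ) * X ^ j
    - C ε * ∏ k ∈ Finset.range m, (X ^ (p - (k + 1)) * (X ^ (2 * (k + 1)) - 1)) with hF
  have h0 : aeval ζ F = 0 := by
    simp only [hF, map_sub, map_sum, map_mul, map_prod, map_pow, aeval_X, aeval_C, map_one]
    simp only [algebraMap_int_eq, eq_intCast]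
    rw [h, sub_self]
  have hdvd : cyclotomic p ℤ ∣ F := by
    rw [cyclotomic_eq_minpoly hζ hp.pos]
    exact minpoly.isIntegrallyClosed_dvd (hζ.isIntegral hp.pos) h0
  have hdvd2 := Polynomial.map_dvd (Int.castRingHom (ZMod p)) hdvd
  rw [map_cyclotomic, aux_cyc] at hdvd2
  obtain ⟨H, hH⟩ := hdvd2
  have hc : ((F.map (Int.castRingHom (ZMod p))).comp (X + 1)).coeff m = 0 := by
    have : X ^ (p - 1) ∣ (F.map (Int.castRingHom (ZMod p))).comp (X + 1) := by
      rw [hH]; simp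
    exact X_pow_dvd_iff.1 this m (by omega)
  have hq : ∀ x : ZMod p, ((quadraticChar (ZMod p) x : ℤ) : ZMod p) = x ^ m := by
    intro x
    rw [quadraticChar_eq_pow_of_char_ne_two' (by rw [ZMod.ringChar_zmod_n]; omega), ZMod.card]
    congr 1; omega
  have hprod : ∏ k ∈ Finset.range m, ((X + 1 : (ZMod p)[X]) ^ (p - (k + 1)) * ((X + 1) ^ (2 * (k + 1)) - 1))
      = X ^ m * ∏ k ∈ Finset.range m, ((X + 1 : (ZMod p)[X]) ^ (p - (k + 1)) *
        ∑ i ∈ Finset.range (2 * (k + 1)), (X + 1) ^ i) := by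
    have : (X : (ZMod p)[X]) ^ m = ∏ k ∈ Finset.range m, X := by simp
    rw [this, ← Finset.prod_mul_distrib]
    refine Finset.prod_congr rfl fun k _ => ?_
    rw [← mul_geom_sum]; ring
  have h3 : (F.map (Int.castRingHom (ZMod p))).comp (X + 1) =
      ∑ j ∈ Finset.range p, C ((j : ZMod p) ^ m) * (X + 1) ^ j - C (ε : ZMod p) *
       (X ^ m * ∏ k ∈ Finset.range m, ((X + 1 : (ZMod p)[X]) ^ (p - (k + 1)) *
        ∑ i ∈ Finset.range (2 * (k + 1)), (X + 1) ^ i)) := by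
    rw [← hprod, hF]
    simp only [Polynomial.map_sub, Polynomial.map_sum, Polynomial.map_mul, Polynomial.map_prod, Polynomial.map_pow, map_X, map_C,
      Polynomial.map_one, sub_comp, mul_comp, pow_comp, X_comp, C_comp, one_comp, prod_comp,
      Polynomial.sum_comp, Int.coe_castRingHom, hq]
  rw [h3, coeff_sub, coeff_C_mul, finsetSum_coeff, coeff_X_pow_mul', if_pos le_rfl, Nat.sub_self,
    coeff_zero_eq_eval_zero, eval_prod] at hc
  simp only [coeff_C_mul, coeff_X_add_one_pow, eval_mul, eval_pow, eval_add, eval_X, eval_one, zero_add,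
    one_pow, one_mul, eval_finsetSum, Finset.sum_const, Finset.card_range, nsmul_eq_mul, mul_one] at hc
  have h4 : ∏ k ∈ Finset.range m, ((2 * (k + 1) : ℕ) : ZMod p) = 2 ^ m * (m.factorial : ZMod p) := by
    push_cast
    rw [Finset.prod_mul_distrib, ← Finset.prod_range_add_one_eq_factorial]
    push_cast
    rw [Finset.prod_const, Finset.card_range]
  rw [h4] at hc
  have h5 : (∑ j ∈ Finset.range p, (j : ZMod p) ^ m * (j.choose m : ZMod p)) * m.factorial = -1 := by
    rw [← aux_sum_poly p m hm, ← aux_sum_range p (fun x => x ^ m * (descPochhammer (ZMod p) m).eval x), Finset.sum_mul]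
    refine Finset.sum_congr rfl fun j _ => ?_
    rw [descPochhammer_eval_eq_descFactorial, Nat.descFactorial_eq_factorial_mul_choose]
    push_cast; ring
  rw [sub_eq_zero.1 hc] at h5
  rw [← h5]; ring

theorem aux_wilson (p m : ℕ) [Fact p.Prime] (hm : p = 2 * m + 1) (hodd : Odd m) :
    (m.factorial : ZMod p) ^ 2 = 1 := by
  have h := ZMod.wilsons_lemma p
  have h1 : p - 1 = m + m := by omega
  rw [h1, ← Finset.prod_range_add_one_eq_factorial, Finset.prod_range_add,
    ← Finset.prod_range_reflect (fun x => m + x + 1), Finset.prod_range_add_one_eq_factorial] at h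
  have h2 : ((∏ j ∈ Finset.range m, (m + (m - 1 - j) + 1) : ℕ) : ZMod p) = - m.factorial := by
    rw [← Finset.prod_range_add_one_eq_factorial]
    push_cast
    have : ∀ j ∈ Finset.range m, ((m : ZMod p) + ((m - 1 - j : ℕ) : ZMod p) + 1)
        = (-1) * ((j : ZMod p) + 1) := by
      intro j hj
      rw [Finset.mem_range] at hj
      have h3 : ((m + (m - 1 - j) + 1 + (j + 1) : ℕ) : ZMod p) = 0 := by
        rw [show m + (m - 1 - j) + 1 + (j + 1) = p by omega]; simp
      push_cast at h3
      linear_combination h3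
    rw [Finset.prod_congr rfl this, Finset.prod_mul_distrib, Finset.prod_const, Finset.card_range,
      hodd.neg_one_pow]
    ring
  rw [Nat.cast_mul, h2] at h
  linear_combination -h

theorem aux_Q_sq (p m : ℕ) (hm : p = 2 * m + 1) (hodd : Odd m) (ζ : ℂ)
    (hζ : IsPrimitiveRoot ζ p) :
    (∏ k ∈ Finset.range m, (ζ ^ (p - (k + 1)) * (ζ ^ (2 * (k + 1)) - 1))) ^ 2 = -(p : ℂ) := by
  have hμ : IsPrimitiveRoot (ζ ^ 2) ((m + m) + 1) := by
    have : p = m + m + 1 := by omega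
    rw [← this]
    refine hζ.pow_of_coprime 2 ?_
    rw [Nat.coprime_two_left]
    exact ⟨m, by omega⟩
  have h := hμ.prod_one_sub_pow_eq_order
  rw [Finset.prod_range_add, ← Finset.prod_range_reflect (fun x => 1 - (ζ ^ 2) ^ (m + x + 1)),
    ← Finset.prod_mul_distrib] at h
  have h1 : ∀ j ∈ Finset.range m, (1 - (ζ ^ 2) ^ (j + 1)) * (1 - (ζ ^ 2) ^ (m + (m - 1 - j) + 1))
      = (-1) * (ζ ^ (p - (j + 1)) * (ζ ^ (2 * (j + 1)) - 1)) ^ 2 := by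
    intro j hj
    rw [Finset.mem_range] at hj
    have h2 : m + (m - 1 - j) + 1 = p - (j + 1) := by omega
    have hab : ζ ^ (j + 1) * ζ ^ (p - (j + 1)) = 1 := by
      rw [← pow_add, show j + 1 + (p - (j + 1)) = p by omega, hζ.pow_eq_one]
    rw [h2, ← pow_mul, ← pow_mul, mul_comm 2 (j + 1), mul_comm 2 (p - (j + 1)), pow_mul, pow_mul]
    generalize ζ ^ (j + 1) = a at *
    generalize ζ ^ (p - (j + 1)) = b at *
    have : b * (a ^ 2 - 1) = a - b := by linear_combination a * hab
    rw [this]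
    linear_combination (a * b - 1) * hab
  rw [Finset.prod_congr rfl h1, Finset.prod_mul_distrib, Finset.prod_const, Finset.card_range,
    hodd.neg_one_pow, Finset.prod_pow] at h
  have : (p : ℂ) = ((m + m : ℕ) : ℂ) + 1 := by rw [hm]; push_cast; ring
  rw [this]
  linear_combination -h

theorem aux_Q_val (p m : ℕ) (hm : p = 2 * m + 1) :
    ∃ S : ℝ, 0 < S ∧ ∏ k ∈ Finset.range m, (Complex.exp (2 * Real.pi * Complex.I / p) ^ (p - (k + 1))
      * (Complex.exp (2 * Real.pi * Complex.I / p) ^ (2 * (k + 1)) - 1))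
      = Complex.I ^ m * (S : ℂ) := by
  have hp0 : (p : ℂ) ≠ 0 := by rw [hm]; exact_mod_cast Nat.succ_ne_zero (2 * m)
  have hpr : (0 : ℝ) < p := by rw [hm]; positivity
  refine ⟨∏ k ∈ Finset.range m, (2 * Real.sin (2 * Real.pi * (k + 1) / p)), ?_, ?_⟩
  · refine Finset.prod_pos fun k hk => ?_
    rw [Finset.mem_range] at hk
    have : Real.sin (2 * Real.pi * (k + 1) / p) > 0 := by
      apply Real.sin_pos_of_pos_of_lt_pi
      · positivity
      · rw [div_lt_iff₀ hpr]
        have : (2 * (k + 1) : ℝ) < p := by exact_mod_cast (by omega : 2 * (k + 1) < p)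
        nlinarith [Real.pi_pos]
    linarith
  · have : Complex.I ^ m = ∏ k ∈ Finset.range m, Complex.I := by simp
    rw [this, Complex.ofReal_prod, ← Finset.prod_mul_distrib]
    refine Finset.prod_congr rfl fun k hk => ?_
    rw [Finset.mem_range] at hk
    rw [← Complex.exp_nat_mul, ← Complex.exp_nat_mul]
    have e1 : ((p - (k + 1) : ℕ) : ℂ) * (2 * Real.pi * Complex.I / p)
        = -(2 * Real.pi * (k + 1) / p * Complex.I) + 2 * Real.pi * Complex.I := by
      rw [Nat.cast_sub (by omega)]; push_cast; field_simp; ring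
    have e2 : ((2 * (k + 1) : ℕ) : ℂ) * (2 * Real.pi * Complex.I / p)
        = (2 * Real.pi * (k + 1) / p * Complex.I) + (2 * Real.pi * (k + 1) / p * Complex.I) := by
      push_cast; ring
    rw [e1, e2, Complex.exp_add, Complex.exp_add, Complex.exp_two_pi_mul_I]
    push_cast
    rw [Complex.sin]
    have hn := Complex.exp_neg (2 * Real.pi * (k + 1) / p * Complex.I)
    have hne := Complex.exp_ne_zero (2 * Real.pi * (k + 1) / p * Complex.I)
    rw [neg_mul, hn]
    generalize Complex.exp (2 * Real.pi * (k + 1) / p * Complex.I) = E at *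
    field_simp
    linear_combination (-1 + E ^ 2) * Complex.I_sq

noncomputable def auxChi (p : ℕ) [Fact p.Prime] : MulChar (ZMod p) ℂ :=
  (quadraticChar (ZMod p)).ringHomComp (Int.castRingHom ℂ)

theorem aux_std (p : ℕ) [NeZero p] (j : ℕ) : ZMod.stdAddChar (j : ZMod p)
    = Complex.exp (2 * Real.pi * Complex.I / p) ^ j := by
  have := ZMod.stdAddChar_coe (N := p) (j : ℤ)
  rw [← Complex.exp_nat_mul]
  push_cast at this
  rw [this]; congr 1; ring

theorem aux_gauss (p : ℕ) [Fact p.Prime] (h3 : p % 4 = 3) :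
    gaussSum (auxChi p) (ZMod.stdAddChar (N := p)) = Complex.I * (Real.sqrt p : ℝ) := by
  have hp := (Fact.out : p.Prime)
  obtain ⟨m, hm⟩ : ∃ m, p = 2 * m + 1 := ⟨p / 2, by omega⟩
  have hodd : Odd m := by rw [Nat.odd_iff]; omega
  have hchar : ringChar (ZMod p) ≠ 2 := by rw [ZMod.ringChar_zmod_n]; omega
  set ζ := Complex.exp (2 * Real.pi * Complex.I / p) with hζd
  have hζ : IsPrimitiveRoot ζ p := Complex.isPrimitiveRoot_exp p hp.ne_zero
  set G := gaussSum (auxChi p) (ZMod.stdAddChar (N := p)) with hG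
  have hGsum : G = ∑ j ∈ Finset.range p, ((quadraticChar (ZMod p) (j : ZMod p) : ℤ) : ℂ) * ζ ^ j := by
    rw [hG, gaussSum, ← aux_sum_range]
    refine Finset.sum_congr rfl fun j _ => ?_
    rw [aux_std]; rfl
  have hGsq : G ^ 2 = -(p : ℂ) := by
    rw [hG, gaussSum_sq (χ := auxChi p) ?_ ?_ (ZMod.isPrimitive_stdAddChar p), ZMod.card]
    · have : quadraticChar (ZMod p) (-1) = -1 := by
        rw [quadraticChar_neg_one_iff_not_isSquare, ZMod.exists_sq_eq_neg_one_iff]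
        simpa using h3
      simp [auxChi, this]
    · exact (MulChar.ringHomComp_ne_one_iff (RingHom.injective_int _)).2 (quadraticChar_ne_one hchar)
    · exact (quadraticChar_isQuadratic (ZMod p)).comp _
  have hQsq := aux_Q_sq p m hm hodd ζ hζ
  obtain ⟨S, hS, hQ⟩ := aux_Q_val p m hm
  rw [← hζd] at hQ
  have key : ∀ ε : ℤ, G = ε * ∏ k ∈ Finset.range m, (ζ ^ (p - (k + 1)) * (ζ ^ (2 * (k + 1)) - 1)) →
      (ε : ZMod p) * 2 ^ m = -1 := by
    intro ε h
    have := aux_key p m hm ζ hζ ε (hGsum ▸ h)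
    rwa [aux_wilson p m hm hodd, mul_one] at this
  have h2 := FiniteField.two_pow_card hchar
  rw [ZMod.card, show p / 2 = m by omega, ZMod.χ₈_nat_eq_if_mod_eight] at h2
  have hne : (1 : ZMod p) ≠ -1 := by
    intro h
    exact Ring.neg_one_ne_one_of_char_ne_two hchar h.symm
  have hmain : G = Complex.I * S := by
    have hcase : p % 8 = 3 ∨ p % 8 = 7 := by omega
    have hI : (p % 8 = 3 → Complex.I ^ m = Complex.I) ∧ (p % 8 = 7 → Complex.I ^ m = -Complex.I) := by
      constructor
      · intro h
        obtain ⟨r, hr⟩ : ∃ r, m = 4 * r + 1 := ⟨m / 4, by omega⟩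
        rw [hr, pow_succ, pow_mul, Complex.I_pow_four]; simp
      · intro h
        obtain ⟨r, hr⟩ : ∃ r, m = 4 * r + 3 := ⟨m / 4, by omega⟩
        rw [hr, pow_add, pow_mul, Complex.I_pow_four]; simp [pow_succ]
    rcases sq_eq_sq_iff_eq_or_eq_neg.1 (hGsq.trans hQsq.symm) with h | h
    · have k := key 1 (by rw [h]; simp)
      rcases hcase with h8 | h8
      · rw [h, hQ, hI.1 h8]
      · simp [h8, show p % 2 ≠ 0 by omega] at h2
        rw [h2] at k
        simp at k
        exact absurd k hne
    · have k := key (-1) (by rw [h]; simp)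
      rcases hcase with h8 | h8
      · simp [h8, show p % 2 ≠ 0 by omega] at h2
        rw [h2] at k
        simp at k
        exact absurd k hne
      · rw [h, hQ, hI.2 h8]; ring
  have hSp : S ^ 2 = p := by
    rw [hmain, mul_pow, Complex.I_sq] at hGsq
    have : (S : ℂ) ^ 2 = p := by linear_combination -hGsq
    exact_mod_cast this
  rw [hmain, ← hSp, Real.sqrt_sq hS.le]

theorem aux_quad (p : ℕ) [Fact p.Prime] (hp2 : p ≠ 2) (k : ZMod p) (hk : k ≠ 0) :
    ∑ x : ZMod p, ZMod.stdAddChar (k * x ^ 2)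
      = auxChi p k * gaussSum (auxChi p) (ZMod.stdAddChar (N := p)) := by
  classical
  have hchar : ringChar (ZMod p) ≠ 2 := by rwa [ZMod.ringChar_zmod_n]
  have hsh := gaussSum_mulShift (auxChi p) (ZMod.stdAddChar (N := p)) (Units.mk0 k hk)
  have hsq : auxChi p k * auxChi p k = 1 := by
    have := quadraticChar_sq_one hk
    rw [pow_two] at this
    change ((quadraticChar (ZMod p) k : ℤ) : ℂ) * ((quadraticChar (ZMod p) k : ℤ) : ℂ) = 1
    exact_mod_cast this
  rw [← hsh, Units.val_mk0, ← mul_assoc, hsq, one_mul, gaussSum]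
  have h0 : ∑ a : ZMod p, ZMod.stdAddChar (k * a) = (0 : ℂ) := by
    have := AddChar.sum_mulShift k (ZMod.isPrimitive_stdAddChar p)
    rw [if_neg hk] at this
    simpa [mul_comm] using this
  have h1 : ∑ x : ZMod p, (ZMod.stdAddChar (k * x ^ 2) : ℂ)
      = ∑ a : ZMod p, ∑ x ∈ Finset.univ.filter (fun x : ZMod p => x ^ 2 = a),
        (ZMod.stdAddChar (k * x ^ 2) : ℂ) :=
    (Finset.sum_fiberwise _ _ _).symm
  rw [h1]
  have h2 : ∀ a : ZMod p, ∑ x ∈ Finset.univ.filter (fun x : ZMod p => x ^ 2 = a),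
        (ZMod.stdAddChar (k * x ^ 2) : ℂ) = auxChi p a * ZMod.stdAddChar (k * a)
          + ZMod.stdAddChar (k * a) := by
    intro a
    have e : ∀ x ∈ Finset.univ.filter (fun x : ZMod p => x ^ 2 = a),
        (ZMod.stdAddChar (k * x ^ 2) : ℂ) = ZMod.stdAddChar (k * a) := by
      intro x hx; rw [(Finset.mem_filter.1 hx).2]
    rw [Finset.sum_congr rfl e, Finset.sum_const, nsmul_eq_mul]
    have hc := quadraticChar_card_sqrts hchar a
    have hs : {x : ZMod p | x ^ 2 = a}.toFinset = Finset.univ.filter (fun x : ZMod p => x ^ 2 = a) := by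
      ext; simp
    rw [hs] at hc
    have hc' : ((Finset.univ.filter (fun x : ZMod p => x ^ 2 = a)).card : ℂ) = auxChi p a + 1 := by
      change _ = ((quadraticChar (ZMod p) a : ℤ) : ℂ) + 1
      exact_mod_cast hc
    rw [hc']; ring
  simp_rw [h2]
  rw [Finset.sum_add_distrib, h0, add_zero]
  rfl

theorem aux_half (p m : ℕ) [NeZero p] (hm : p = 2 * m + 1) (g : ZMod p → ℂ)
    (hg : ∀ x, g (-x) = g x) :
    ∑ x : ZMod p, g x = g 0 + 2 * ∑ n ∈ Finset.Icc 1 m, g (n : ZMod p) := by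
  have hI : ∑ n ∈ Finset.Icc 1 m, g (n : ZMod p) = ∑ n ∈ Finset.range m, g ((n + 1 : ℕ) : ZMod p) := by
    rw [Finset.range_eq_Ico, Finset.sum_Ico_add' (fun n : ℕ => g (n : ZMod p)) 0 m 1]
    rfl
  rw [← aux_sum_range]
  have : Finset.range p = Finset.range (m + m + 1) := by congr 1; omega
  rw [this, Finset.sum_range_succ', Finset.sum_range_add, hI,
    ← Finset.sum_range_reflect (fun x => g ((m + x + 1 : ℕ) : ZMod p))]
  have : ∀ j ∈ Finset.range m, g ((m + (m - 1 - j) + 1 : ℕ) : ZMod p) = g ((j + 1 : ℕ) : ZMod p) := by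
    intro j hj
    rw [Finset.mem_range] at hj
    rw [← hg ((j + 1 : ℕ) : ZMod p)]
    congr 1
    rw [eq_neg_iff_add_eq_zero, ← Nat.cast_add, show m + (m - 1 - j) + 1 + (j + 1) = p by omega]
    simp
  rw [Finset.sum_congr rfl this]
  push_cast; ring

theorem aux_alt (n : ℕ) (z : ℂ) :
    (∑ k ∈ Finset.Icc 1 n, (-1) ^ (k + 1) * z ^ k) * (z + 1) = z - (-1) ^ n * z ^ (n + 1) := by
  induction n with
  | zero => simp
  | succ n ih =>
    rw [Finset.sum_Icc_succ_top (by omega), add_mul, ih]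
    ring

theorem aux_tan (p m : ℕ) (hm : p = 2 * m + 1) (a : ℕ) :
    Complex.I * (Real.tan (Real.pi * a / p) : ℝ)
      = ∑ k ∈ Finset.Icc 1 (p - 1), (-1) ^ (k + 1) *
        (Complex.exp (2 * Real.pi * Complex.I / p) ^ a) ^ k := by
  have hp0 : (p : ℂ) ≠ 0 := by rw [hm]; exact_mod_cast Nat.succ_ne_zero (2 * m)
  have hz1 : (Complex.exp (2 * Real.pi * Complex.I / p) ^ a) ^ p = 1 := by
    rw [pow_right_comm, ← Complex.exp_nat_mul, mul_div_cancel₀ _ hp0,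
      Complex.exp_two_pi_mul_I, one_pow]
  have hzE : Complex.exp (2 * Real.pi * Complex.I / p) ^ a
      = Complex.exp (Real.pi * a / p * Complex.I) * Complex.exp (Real.pi * a / p * Complex.I) := by
    rw [← Complex.exp_nat_mul, ← Complex.exp_add]; congr 1; ring
  set z := Complex.exp (2 * Real.pi * Complex.I / p) ^ a with hz
  have hne : z + 1 ≠ 0 := by
    intro h
    have : z = -1 := by linear_combination h
    rw [this, Odd.neg_one_pow ⟨m, hm⟩] at hz1
    norm_num at hz1
  have hs := aux_alt (p - 1) z
  have : p - 1 + 1 = p := by omega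
  rw [this, hz1, Even.neg_one_pow ⟨m, by omega⟩] at hs
  apply mul_right_cancel₀ hne
  rw [hs]
  push_cast
  rw [Complex.tan, Complex.sin, Complex.cos, neg_mul, Complex.exp_neg]
  have hE0 := Complex.exp_ne_zero (Real.pi * a / p * Complex.I)
  generalize Complex.exp (Real.pi * a / p * Complex.I) = E at *
  rw [hzE] at hne ⊢
  have h1 : E + E⁻¹ ≠ 0 := by
    intro h; apply hne
    field_simp at h
    linear_combination h
  have h2 : E ^ 2 + 1 ≠ 0 := by intro h; apply hne; linear_combination h
  field_simp
  linear_combination (1 - E ^ 2) * Complex.I_sq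

theorem aux_alt_zero (p m : ℕ) (hm : p = 2 * m + 1) :
    ∑ k ∈ Finset.Icc 1 (p - 1), (-1 : ℂ) ^ (k + 1) = 0 := by
  have h := aux_alt (p - 1) 1
  rw [Even.neg_one_pow ⟨m, by omega⟩] at h
  simp only [one_pow, mul_one, sub_self] at h
  exact (mul_eq_zero.1 h).resolve_right (by norm_num)

theorem aux_sqiff (p : ℕ) [Fact p.Prime] (k : ℕ) :
    (∃ x ∈ Finset.range p, x * x % p = k % p) ↔ IsSquare (k : ZMod p) := by
  constructor
  · rintro ⟨x, _, h⟩
    refine ⟨(x : ZMod p), ?_⟩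
    rw [← Nat.cast_mul]
    exact ((ZMod.natCast_eq_natCast_iff' _ _ _).2 h).symm
  · rintro ⟨y, h⟩
    refine ⟨y.val, by simpa using ZMod.val_lt y, ?_⟩
    rw [← ZMod.natCast_eq_natCast_iff']
    simp [h]

theorem aux_count (p m : ℕ) [Fact p.Prime] (hm : p = 2 * m + 1) :
    ∑ k ∈ Finset.Icc 1 (p - 1), (-1 : ℂ) ^ (k + 1) * auxChi p (k : ZMod p)
      = 2 * ((qo p : ℂ) - (qe p : ℂ)) := by
  classical
  have h0 := aux_alt_zero p m hm
  rw [qo, qe, Finset.card_filter, Finset.card_filter]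
  push_cast
  rw [← Finset.sum_sub_distrib, ← add_zero (Finset.sum _ _), ← h0, ← Finset.sum_add_distrib,
    Finset.mul_sum]
  refine Finset.sum_congr rfl fun k hk => ?_
  rw [Finset.mem_Icc] at hk
  have hk0 : (k : ZMod p) ≠ 0 := by
    rw [Ne, ZMod.natCast_eq_zero_iff]
    intro h
    have := Nat.le_of_dvd (by omega) h
    omega
  have hv : auxChi p (k : ZMod p) = if IsSquare (k : ZMod p) then 1 else -1 := by
    change ((quadraticChar (ZMod p) (k : ZMod p) : ℤ) : ℂ) = _
    split_ifs with h
    · rw [(quadraticChar_one_iff_isSquare hk0).2 h]; simp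
    · rw [quadraticChar_neg_one_iff_not_isSquare.2 h]; simp
  rw [hv]
  simp only [aux_sqiff]
  rcases Nat.even_or_odd k with h | h
  · have ho : ¬ Odd k := Nat.not_odd_iff_even.2 h
    rw [pow_succ, h.neg_one_pow]
    by_cases hs : IsSquare (k : ZMod p) <;> simp [h, ho, hs, h0] <;> norm_num
  · have ho : ¬ Even k := Nat.not_even_iff_odd.2 h
    rw [pow_succ, h.neg_one_pow]
    by_cases hs : IsSquare (k : ZMod p) <;> simp [h, ho, hs, h0] <;> norm_num

theorem T_eq_p_mul_qo_sub_qe (p : ℕ) (hp : p.Prime) (h3 : p % 4 = 3) :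
    T p = (p : ℝ) * ((qo p : ℝ) - (qe p : ℝ)) := by
  have : Fact p.Prime := ⟨hp⟩
  obtain ⟨m, hm⟩ : ∃ m, p = 2 * m + 1 := ⟨p / 2, by omega⟩
  have hG := aux_gauss p h3
  have hin : ∀ k ∈ Finset.Icc 1 (p - 1), 2 * ∑ n ∈ Finset.Icc 1 m,
      (Complex.exp (2 * Real.pi * Complex.I / p) ^ (n ^ 2)) ^ k
      = auxChi p (k : ZMod p) * (Complex.I * (Real.sqrt p : ℝ)) - 1 := by
    intro k hk
    rw [Finset.mem_Icc] at hk
    have hk0 : (k : ZMod p) ≠ 0 := by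
      rw [Ne, ZMod.natCast_eq_zero_iff]
      intro h
      have := Nat.le_of_dvd (by omega) h
      omega
    rw [← hG, ← aux_quad p (by omega) _ hk0,
      aux_half p m hm (fun x => ZMod.stdAddChar ((k : ZMod p) * x ^ 2)) (by intro x; simp)]
    simp only [ne_eq, OfNat.ofNat_ne_zero, not_false_eq_true, zero_pow, mul_zero,
      AddChar.map_zero_eq_one, add_sub_cancel_left]
    congr 1
    refine Finset.sum_congr rfl fun n _ => ?_
    rw [← pow_mul, ← aux_std]
    congr 1
    push_cast; ring
  have hsum : 2 * (Complex.I * ((∑ n ∈ Finset.Icc 1 m, Real.tan (Real.pi * (n : ℝ) ^ 2 / p) : ℝ) : ℂ))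
      = Complex.I * (Real.sqrt p : ℝ) * (2 * ((qo p : ℂ) - (qe p : ℂ))) := by
    rw [← aux_count p m hm, Complex.ofReal_sum, Finset.mul_sum]
    have e : ∀ n ∈ Finset.Icc 1 m, Complex.I * ((Real.tan (Real.pi * (n : ℝ) ^ 2 / p) : ℝ) : ℂ)
        = ∑ k ∈ Finset.Icc 1 (p - 1), (-1) ^ (k + 1) *
        (Complex.exp (2 * Real.pi * Complex.I / p) ^ (n ^ 2)) ^ k := by
      intro n _
      rw [← aux_tan p m hm (n ^ 2)]
      push_cast; rfl
    rw [Finset.sum_congr rfl e, Finset.sum_comm, Finset.mul_sum, Finset.mul_sum]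
    have e2 : ∀ k ∈ Finset.Icc 1 (p - 1), 2 * ∑ n ∈ Finset.Icc 1 m, (-1) ^ (k + 1) *
        (Complex.exp (2 * Real.pi * Complex.I / p) ^ (n ^ 2)) ^ k
        = Complex.I * (Real.sqrt p : ℝ) * ((-1) ^ (k + 1) * auxChi p (k : ZMod p)) - (-1) ^ (k + 1) := by
      intro k hk
      rw [← Finset.mul_sum]
      linear_combination (-1) ^ (k + 1) * hin k hk
    rw [Finset.sum_congr rfl e2, Finset.sum_sub_distrib, aux_alt_zero p m hm, sub_zero]
  have hfin : (∑ n ∈ Finset.Icc 1 m, Real.tan (Real.pi * (n : ℝ) ^ 2 / p))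
      = Real.sqrt p * ((qo p : ℝ) - (qe p : ℝ)) := by
    have : ((∑ n ∈ Finset.Icc 1 m, Real.tan (Real.pi * (n : ℝ) ^ 2 / p) : ℝ) : ℂ)
      = (Real.sqrt p : ℝ) * ((qo p : ℂ) - (qe p : ℂ)) := by
      apply mul_left_cancel₀ (mul_ne_zero two_ne_zero Complex.I_ne_zero)
      linear_combination hsum
    exact_mod_cast this
  rw [T, show (p - 1) / 2 = m by omega, hfin, ← mul_assoc, Real.mul_self_sqrt (Nat.cast_nonneg p)]
end

section
/- Let p be a prime with p ≡ 3 (mod 4). Then T(p) = √p · Σ_{n=1}^{(p-1)/2} tan(π n²/p) is an odd integer, divisible by p but not by p². -/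
/-- Sums over `1..2m` of symmetric functions. -/
theorem aux_sum_symm (m : ℕ) (h : ℕ → ℂ) (hs : ∀ k ∈ Finset.Icc 1 m, h (2 * m + 1 - k) = h k) :
    ∑ k ∈ Finset.Icc 1 (2 * m), h k = 2 * ∑ k ∈ Finset.Icc 1 m, h k := by
  have e : Finset.Icc 1 (2 * m) = Finset.Icc 1 m ∪ Finset.Icc (m + 1) (2 * m) := by
    ext k; simp only [Finset.mem_union, Finset.mem_Icc]; omega
  have d : Disjoint (Finset.Icc 1 m) (Finset.Icc (m + 1) (2 * m)) := by
    rw [Finset.disjoint_left]; intro k; simp only [Finset.mem_Icc]; omega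
  rw [e, Finset.sum_union d, two_mul (∑ k ∈ Finset.Icc 1 m, h k)]
  rw [add_right_inj]
  symm
  refine Finset.sum_bij (M := ℂ) (fun k _ => 2 * m + 1 - k) ?_ ?_ ?_ ?_
  · intro k; simp only [Finset.mem_Icc]; omega
  · intro k hk l hl; simp only [Finset.mem_Icc] at hk hl; omega
  · intro k hk
    simp only [Finset.mem_Icc] at hk
    exact ⟨2 * m + 1 - k, by simp only [Finset.mem_Icc]; omega, by omega⟩
  · intro k hk; exact (hs k hk).symm

theorem aux_sum_zmod (p : ℕ) [NeZero p] (f : ZMod p → ℂ) :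
    ∑ x : ZMod p, f x = f 0 + ∑ k ∈ Finset.Icc 1 (p - 1), f (k : ZMod p) := by
  have h1 : ∑ x : ZMod p, f x = ∑ k ∈ Finset.range p, f (k : ZMod p) := by
    symm
    refine Finset.sum_bij (fun k _ => (k : ZMod p)) (by simp) ?_ ?_ (by simp)
    · intro a ha b hb hab
      simp only [Finset.mem_range] at ha hb
      rw [ZMod.natCast_eq_natCast_iff'] at hab
      rwa [Nat.mod_eq_of_lt ha, Nat.mod_eq_of_lt hb] at hab
    · intro b _
      exact ⟨b.val, by simpa using ZMod.val_lt b, by simp⟩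
  rw [h1]
  obtain ⟨q, rfl⟩ : ∃ q, p = q + 1 := ⟨p - 1, by have := NeZero.pos p; omega⟩
  rw [Finset.sum_range_eq_add_Ico _ (by omega)]
  simp only [Nat.cast_zero, Nat.add_sub_cancel]
  rfl

/-- The finite Fourier expansion of `i tan`. -/
noncomputable def auxF (p : ℕ) [NeZero p] (a : ZMod p) : ℂ :=
  -∑ k ∈ Finset.Icc 1 (p - 1), (-1 : ℂ) ^ k * ZMod.stdAddChar (N := p) (a * (k : ZMod p))

theorem auxF_tan (p : ℕ) [NeZero p] (hodd : Odd p) (n : ℕ) :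
    auxF p (n : ZMod p) = Complex.I * (Real.tan (Real.pi * n / p) : ℝ) := by
  set w : ℂ := ZMod.stdAddChar (N := p) (n : ZMod p) with hw
  have hp0 : (p : ℂ) ≠ 0 := by exact_mod_cast NeZero.ne p
  have hwp : w ^ p = 1 := by
    rw [hw, ← AddChar.map_nsmul_eq_pow]; simp
  have hw1 : w + 1 ≠ 0 := by
    intro h
    have : w = -1 := by linear_combination h
    rw [this, hodd.neg_one_pow] at hwp
    norm_num at hwp
  have hF : auxF p (n : ZMod p) = 1 - ∑ k ∈ Finset.range p, (-w) ^ k := by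
    obtain ⟨q, hq⟩ : ∃ q, p = q + 1 := ⟨p - 1, by have := NeZero.pos p; omega⟩
    have : Finset.Icc 1 (p - 1) = Finset.Ico 1 p := by
      ext k; simp only [Finset.mem_Icc, Finset.mem_Ico]; omega
    rw [auxF, this, Finset.sum_range_eq_add_Ico _ (NeZero.pos p)]
    simp only [pow_zero]
    rw [sub_add_cancel_left]
    congr 1
    refine Finset.sum_congr rfl fun k _ => ?_
    rw [neg_pow w k, hw, ← AddChar.map_nsmul_eq_pow, nsmul_eq_mul, mul_comm (k : ZMod p)]
  have hg := mul_neg_geom_sum (-w) p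
  rw [neg_pow w, hwp, hodd.neg_one_pow] at hg
  have key : (w + 1) * auxF p (n : ZMod p) = w - 1 := by
    rw [hF]; linear_combination -hg
  set x : ℂ := ((Real.pi * n / p : ℝ) : ℂ) with hx
  have hwx : w = Complex.exp (x * Complex.I) * Complex.exp (x * Complex.I) := by
    rw [← Complex.exp_add, hw]
    have := ZMod.stdAddChar_coe (N := p) (n : ℤ)
    push_cast at this
    rw [this]
    congr 1
    rw [hx]; push_cast; ring
  have he : Complex.exp (x * Complex.I) ≠ 0 := Complex.exp_ne_zero _
  have hcs : Complex.exp (x * Complex.I) = Complex.cos x + Complex.sin x * Complex.I :=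
    Complex.exp_mul_I x
  have h1 := Complex.sin_sq_add_cos_sq x
  have hI := Complex.I_sq
  have ha : w + 1 = 2 * Complex.cos x * Complex.exp (x * Complex.I) := by
    rw [hwx, hcs]; linear_combination (-1 : ℂ) * h1 + Complex.sin x ^ 2 * hI
  have hb : w - 1 = 2 * Complex.I * Complex.sin x * Complex.exp (x * Complex.I) := by
    rw [hwx, hcs]; linear_combination h1 - Complex.sin x ^ 2 * hI
  have hc : Complex.cos x ≠ 0 := by
    intro h; rw [ha, h] at hw1; simp at hw1
  rw [Complex.ofReal_tan, ← hx, Complex.tan_eq_sin_div_cos]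
  apply mul_left_cancel₀ hw1
  rw [key, hb, ha]
  field_simp

theorem aux_odd_sum (s : Finset ℕ) (f : ℕ → ℤ) (hs : Odd s.card) (hf : ∀ k ∈ s, Odd (f k)) :
    Odd (∑ k ∈ s, f k) := by
  have h : (2 : ℤ) ∣ ∑ k ∈ s, (f k - 1) := by
    refine Finset.dvd_sum fun k hk => ?_
    obtain ⟨r, hr⟩ := hf k hk
    exact ⟨r, by omega⟩
  rw [Finset.sum_sub_distrib, Finset.sum_const, nsmul_eq_mul, mul_one] at h
  rw [Nat.odd_iff] at hs
  rw [Int.odd_iff]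
  omega

theorem aux_main (p : ℕ) [Fact p.Prime] (h3 : p % 4 = 3) :
    ∃ (g : ℂ) (C : ℤ), g ^ 2 = -p ∧ Odd C ∧ |C| < p ∧
      Complex.I * ((∑ n ∈ Finset.Icc 1 ((p - 1) / 2),
        Real.tan (Real.pi * (n : ℝ) ^ 2 / p) : ℝ) : ℂ) = -g * C := by
  obtain ⟨m, hm⟩ : ∃ m, p = 2 * m + 1 := ⟨p / 2, by omega⟩
  have hodd : Odd p := ⟨m, hm⟩
  have hm2 : (p - 1) / 2 = m := by omega
  have hm1 : p - 1 = 2 * m := by omega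
  have hchar : ringChar (ZMod p) ≠ 2 := by rw [ZMod.ringChar_zmod_n]; omega
  set χ₀ := quadraticChar (ZMod p) with hχ₀
  set χ : MulChar (ZMod p) ℂ := χ₀.ringHomComp (Int.castRingHom ℂ) with hχ
  have hχa : ∀ a, χ a = ((χ₀ a : ℤ) : ℂ) := fun a => rfl
  have hq : χ.IsQuadratic := (quadraticChar_isQuadratic _).comp _
  have hne : χ ≠ 1 := (MulChar.ringHomComp_ne_one_iff (RingHom.injective_int _)).mpr
    (quadraticChar_ne_one hchar)
  have hneg0 : χ₀ (-1) = -1 := by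
    rw [hχ₀, quadraticChar_neg_one hchar, ZMod.card, ZMod.χ₄_nat_three_mod_four h3]
  have hneg : χ (-1) = -1 := by rw [hχa, hneg0]; simp
  set ψ := ZMod.stdAddChar (N := p) with hψ
  have hprim : ψ.IsPrimitive := ZMod.isPrimitive_stdAddChar p
  set g := gaussSum χ ψ with hg
  have hknz : ∀ k ∈ Finset.Icc 1 (2 * m), (k : ZMod p) ≠ 0 := by
    intro k hk h
    rw [ZMod.natCast_eq_zero_iff] at h
    simp only [Finset.mem_Icc] at hk
    have := Nat.le_of_dvd (by omega) h
    omega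
  have hsub : ∀ k ∈ Finset.Icc 1 m, ((2 * m + 1 - k : ℕ) : ZMod p) = -(k : ZMod p) := by
    intro k hk
    simp only [Finset.mem_Icc] at hk
    rw [← hm, Nat.cast_sub (by omega)]
    simp
  have hIcc : ∀ k ∈ Finset.Icc 1 m, k ∈ Finset.Icc 1 (2 * m) := by
    intro k; simp only [Finset.mem_Icc]; omega
  refine ⟨g, ∑ k ∈ Finset.Icc 1 m, (-1) ^ k * χ₀ (k : ZMod p), ?_, ?_, ?_, ?_⟩
  · rw [hg, gaussSum_sq hne hq hprim, hneg, ZMod.card]; ring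
  · apply aux_odd_sum
    · simp only [Nat.card_Icc]; rw [Nat.odd_iff]; omega
    · intro k hk
      rw [Int.odd_mul]
      refine ⟨Odd.pow (by decide), ?_⟩
      rcases quadraticChar_dichotomy (hknz k (hIcc k hk)) with h | h <;> rw [hχ₀, h] <;> decide
  · refine lt_of_le_of_lt (Finset.abs_sum_le_sum_abs _ _) ?_
    have : ∀ k ∈ Finset.Icc 1 m, |(-1 : ℤ) ^ k * χ₀ (k : ZMod p)| = 1 := by
      intro k hk
      rw [abs_mul, abs_pow, abs_neg, abs_one, one_pow, one_mul]
      rcases quadraticChar_dichotomy (hknz k (hIcc k hk)) with h | h <;> rw [hχ₀, h] <;> decide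
    rw [Finset.sum_congr rfl this]
    simp
    omega
  · rw [hm2]
    have hF0 : auxF p 0 = 0 := by
      have := auxF_tan p hodd 0
      simpa using this
    -- Gauss sums
    have hGk : ∀ k ∈ Finset.Icc 1 (2 * m), ∑ a : ZMod p, χ a * ψ (a * (k : ZMod p))
        = χ (k : ZMod p) * g := by
      intro k hk
      have hu := hknz k hk
      have := gaussSum_mulShift_eq χ ψ (Units.mk0 _ hu)
      rw [hq.inv, Units.val_mk0] at this
      rw [← this, gaussSum]
      refine Finset.sum_congr rfl fun a _ => ?_
      rw [AddChar.mulShift_apply, mul_comm a]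
    have hsumF : ∑ a : ZMod p, auxF p a = 0 := by
      simp only [auxF]
      rw [Finset.sum_neg_distrib, Finset.sum_comm, neg_eq_zero]
      refine Finset.sum_eq_zero fun k hk => ?_
      rw [← Finset.mul_sum, AddChar.sum_mulShift _ hprim, if_neg (hknz k (hm1 ▸ hk))]
      simp
    have hsumχF : ∑ a : ZMod p, χ a * auxF p a
        = -(g * ∑ k ∈ Finset.Icc 1 (2 * m), (-1 : ℂ) ^ k * χ (k : ZMod p)) := by
      simp only [auxF, mul_neg]
      rw [Finset.sum_neg_distrib]
      simp only [Finset.mul_sum]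
      rw [Finset.sum_comm, hm1]
      congr 1
      refine Finset.sum_congr rfl fun k hk => ?_
      rw [mul_comm g, mul_assoc, ← hGk k hk, Finset.mul_sum]
      refine Finset.sum_congr rfl fun a _ => ?_
      rw [← hψ]; ring
    have hsq : ∑ x : ZMod p, auxF p (x ^ 2) = ∑ a : ZMod p, (χ a + 1) * auxF p a := by
      rw [← Finset.sum_fiberwise Finset.univ (fun x : ZMod p => x ^ 2)]
      refine Finset.sum_congr rfl fun a _ => ?_
      have hc := quadraticChar_card_sqrts hchar a
      have hset : {x : ZMod p | x ^ 2 = a}.toFinset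
          = Finset.univ.filter (fun x : ZMod p => x ^ 2 = a) := by ext; simp
      rw [hset] at hc
      rw [Finset.sum_congr rfl (g := fun _ => auxF p a)
        (fun x hx => by rw [(Finset.mem_filter.mp hx).2]), Finset.sum_const, nsmul_eq_mul]
      congr 1
      rw [hχa]
      exact_mod_cast hc
    have hs1 := aux_sum_symm m (fun k => auxF p ((k : ZMod p) ^ 2)) (by
      intro k hk; simp only [hsub k hk, neg_sq])
    have hs2 := aux_sum_symm m (fun k => (-1 : ℂ) ^ k * χ (k : ZMod p)) (by
      intro k hk
      simp only [hsub k hk]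
      have e1 : χ (-(k : ZMod p)) = - χ (k : ZMod p) := by
        rw [neg_eq_neg_one_mul, map_mul, hneg]; ring
      simp only [Finset.mem_Icc] at hk
      have e2 : (-1 : ℂ) ^ (2 * m + 1 - k) = - (-1) ^ k := by
        have : (-1 : ℂ) ^ (2 * m + 1 - k) * (-1) ^ k = -1 := by
          rw [← pow_add, show 2 * m + 1 - k + k = 2 * m + 1 by omega]
          simp [pow_succ, pow_mul]
        have h2 : ((-1 : ℂ) ^ k) * (-1) ^ k = 1 := by rw [← mul_pow]; simp
        linear_combination (-1 : ℂ) ^ k * this - (-1 : ℂ) ^ (2 * m + 1 - k) * h2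
      rw [e1, e2]; ring)
    have hz := aux_sum_zmod p (fun x => auxF p (x ^ 2))
    simp only [hm1] at hz
    rw [hs1, hsq] at hz
    simp only [add_mul, one_mul, Finset.sum_add_distrib, hsumF, hsumχF, hs2] at hz
    rw [show (0 : ZMod p) ^ 2 = 0 by simp, hF0] at hz
    have ht : ∑ k ∈ Finset.Icc 1 m, auxF p ((k : ZMod p) ^ 2) = Complex.I *
        ((∑ n ∈ Finset.Icc 1 m, Real.tan (Real.pi * (n : ℝ) ^ 2 / p) : ℝ) : ℂ) := by
      rw [Complex.ofReal_sum, Finset.mul_sum]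
      refine Finset.sum_congr rfl fun k _ => ?_
      have := auxF_tan p hodd (k ^ 2)
      push_cast at this ⊢
      exact this
    rw [← ht]
    push_cast
    simp only [← hχa]
    linear_combination (-1 / 2 : ℂ) * hz

theorem T_odd_integer_div_p_not_p_sq (p : ℕ) (hp : p.Prime) (h3 : p % 4 = 3) :
    ∃ m : ℤ, T p = (m : ℝ) ∧ Odd m ∧ (p : ℤ) ∣ m ∧ ¬ ((p : ℤ) ^ 2 ∣ m) := by
  have : Fact p.Prime := ⟨hp⟩
  obtain ⟨g, C, hg, hC, hCp, hS⟩ := aux_main p h3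
  have hpos : (0 : ℤ) < p := by exact_mod_cast hp.pos
  have hpo : Odd (p : ℤ) := by
    rw [Int.odd_iff]; omega
  have hndvd : ¬ (p : ℤ) ∣ C := by
    intro h
    have := Int.eq_zero_of_abs_lt_dvd h hCp
    rw [this] at hC
    exact absurd hC (by decide)
  have hnd2 : ¬ (p : ℤ) ^ 2 ∣ p * C := by
    rw [sq, mul_dvd_mul_iff_left hpos.ne']; exact hndvd
  have hsq : ((Real.sqrt p : ℝ) : ℂ) ^ 2 = p := by
    rw [← Complex.ofReal_pow, Real.sq_sqrt (by positivity)]; simp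
  have hgI : (g - Complex.I * (Real.sqrt p : ℝ)) * (g + Complex.I * (Real.sqrt p : ℝ)) = 0 := by
    linear_combination hg - Complex.I ^ 2 * hsq - (p : ℂ) * Complex.I_sq
  unfold T
  set S : ℝ := ∑ n ∈ Finset.Icc 1 ((p - 1) / 2), Real.tan (Real.pi * (n : ℝ) ^ 2 / p) with hSd
  rcases mul_eq_zero.mp hgI with h | h
  · refine ⟨-(p * C), ?_, (hpo.mul hC).neg, (dvd_mul_right _ _).neg_right, by rwa [dvd_neg]⟩
    have : (((Real.sqrt p * S : ℝ)) : ℂ) = ((-(p * C) : ℤ) : ℝ) := by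
      push_cast
      apply mul_left_cancel₀ Complex.I_ne_zero
      linear_combination (Real.sqrt p : ℂ) * hS - (Real.sqrt p : ℂ) * C * h
        - Complex.I * C * hsq
    exact_mod_cast this
  · refine ⟨p * C, ?_, hpo.mul hC, dvd_mul_right _ _, hnd2⟩
    have : (((Real.sqrt p * S : ℝ)) : ℂ) = ((p * C : ℤ) : ℝ) := by
      push_cast
      apply mul_left_cancel₀ Complex.I_ne_zero
      linear_combination (Real.sqrt p : ℂ) * hS - (Real.sqrt p : ℂ) * C * h
        + Complex.I * C * hsq
    exact_mod_cast this
end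

section
/- Let p be a prime with p ≡ 3 (mod 4). Let q_o(p) and q_e(p) be, respectively, the number of odd and even quadratic residues mod p in the set {1, 2, …, p-1}. If p ≡ 3 (mod 8) then q_o(p) > q_e(p), and if p ≡ 7 (mod 8) then q_e(p) > q_o(p). -/
open Finset

lemma prod_pairs {M : Type*} [CommMonoid M] (F : ℕ → M) (m : ℕ) :
    ∏ i ∈ range (2 * m), F (i + 1) = ∏ k ∈ range m, (F (2 * k + 1) * F (2 * k + 2)) := by
  induction m with
  | zero => simp
  | succ m ih =>
    rw [show 2 * (m + 1) = 2 * m + 1 + 1 by ring, prod_range_succ, prod_range_succ, ih,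
      prod_range_succ, mul_assoc]

lemma P_sq (p m : ℕ) (hm : p = 2 * m + 1) (ζ : ℂ) (hζ : IsPrimitiveRoot ζ p) :
    (∏ k ∈ range m, (ζ ^ (2 * k + 1) - ζ ^ (p - (2 * k + 1)))) ^ 2 = (-1) ^ m * (p : ℂ) := by
  set F : ℕ → ℂ := fun j => ζ ^ j - ζ ^ (p - j) with hF
  have h1 : ∏ k ∈ range m, F (2 * k + 2) = ∏ k ∈ range m, (- F (2 * k + 1)) := by
    rw [← prod_range_reflect]
    refine prod_congr rfl fun k hk => ?_
    rw [mem_range] at hk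
    simp only [hF]
    rw [show 2 * (m - 1 - k) + 2 = p - (2 * k + 1) by omega,
      show p - (p - (2 * k + 1)) = 2 * k + 1 by omega]
    ring
  have h2 := prod_pairs F m
  rw [prod_mul_distrib, h1, prod_neg] at h2
  have h3 : ∏ i ∈ range (2 * m), F (i + 1) = p := by
    have h4 : ∀ i ∈ range (2 * m), F (i + 1) = -(ζ ^ (p - (i + 1)) * (1 - (ζ ^ 2) ^ (i + 1))) := by
      intro i hi
      rw [mem_range] at hi
      have : ζ ^ (p - (i + 1)) * (ζ ^ 2) ^ (i + 1) = ζ ^ (i + 1) := by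
        rw [← pow_mul, ← pow_add, show p - (i + 1) + 2 * (i + 1) = p + (i + 1) by omega, pow_add,
          hζ.pow_eq_one, one_mul]
      simp only [hF, mul_sub, this]
      ring
    rw [prod_congr rfl h4, prod_neg, prod_mul_distrib]
    have hζ2 : IsPrimitiveRoot (ζ ^ 2) (2 * m + 1) := by
      rw [← hm]
      apply hζ.pow_of_coprime
      rw [hm]
      simp
    rw [hζ2.prod_one_sub_pow_eq_order, prod_pow_eq_pow_sum]
    have : ∑ i ∈ range (2 * m), (p - (i + 1)) = p * m := by
      rw [← sum_range_reflect]
      have : ∀ i ∈ range (2 * m), p - (2 * m - 1 - i + 1) = i + 1 := by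
        intro i hi
        rw [mem_range] at hi
        omega
      rw [sum_congr rfl this, sum_add_distrib, sum_const, card_range, smul_eq_mul, hm]
      have := Finset.sum_range_id_mul_two (2 * m)
      cases m with
      | zero => simp
      | succ k =>
        rw [show 2 * (k + 1) - 1 = 2 * k + 1 by omega] at this
        nlinarith
    rw [this, pow_mul, hζ.pow_eq_one, hm]
    simp
  rw [h3] at h2
  rw [h2, sq]
  simp only [hF, card_range]
  have : ((-1 : ℂ) ^ m) * (-1) ^ m = 1 := by rw [← mul_pow]; simp
  linear_combination -(∏ k ∈ range m, (ζ ^ (2 * k + 1) - ζ ^ (p - (2 * k + 1)))) ^ 2 * this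

lemma P_im (p n : ℕ) (hp : p = 4 * n + 3) :
    ∃ u : ℝ, 0 < u ∧ ∏ k ∈ range (2 * n + 1),
      (Complex.exp (2 * Real.pi * Complex.I / p) ^ (2 * k + 1) -
        Complex.exp (2 * Real.pi * Complex.I / p) ^ (p - (2 * k + 1))) = Complex.I * u := by
  have hp0 : (p : ℂ) ≠ 0 := Nat.cast_ne_zero.mpr (by omega)
  have hp0' : (0 : ℝ) < p := by rw [hp]; exact_mod_cast (by omega)
  have h1 : ∀ k ∈ range (2 * n + 1),
      (Complex.exp (2 * Real.pi * Complex.I / p) ^ (2 * k + 1) -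
        Complex.exp (2 * Real.pi * Complex.I / p) ^ (p - (2 * k + 1))) =
      Complex.I * ((2 * Real.sin (2 * Real.pi * (2 * k + 1) / p) : ℝ) : ℂ) := by
    intro k hk
    rw [mem_range] at hk
    rw [← Complex.exp_nat_mul, ← Complex.exp_nat_mul]
    have e1 : ((p - (2 * k + 1) : ℕ) : ℂ) * (2 * Real.pi * Complex.I / p) =
        2 * Real.pi * Complex.I + -(((2 * Real.pi * (2 * k + 1) / p : ℝ) : ℂ) * Complex.I) := by
      rw [Nat.cast_sub (by omega)]
      push_cast
      field_simp
      ring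
    have e2 : ((2 * k + 1 : ℕ) : ℂ) * (2 * Real.pi * Complex.I / p) =
        ((2 * Real.pi * (2 * k + 1) / p : ℝ) : ℂ) * Complex.I := by
      push_cast
      field_simp
    rw [e1, e2, Complex.exp_add, Complex.exp_two_pi_mul_I, one_mul, ← neg_mul,
      Complex.exp_mul_I, Complex.exp_mul_I, Complex.cos_neg, Complex.sin_neg]
    push_cast
    ring
  rw [prod_congr rfl h1, prod_mul_distrib, prod_const, card_range]
  rw [show 2 * n + 1 = (n + 1) + n by ring, prod_range_add]
  refine ⟨(∏ k ∈ range (n + 1), 2 * Real.sin (2 * Real.pi * (2 * k + 1) / p)) *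
    ∏ k ∈ range n, (-(2 * Real.sin (2 * Real.pi * (2 * (n + 1 + k : ℕ) + 1) / p))), ?_, ?_⟩
  · apply mul_pos
    · apply prod_pos
      intro k hk
      rw [mem_range] at hk
      have hk' : (2 : ℝ) * (2 * k + 1) < p := by rw [hp]; exact_mod_cast (by omega)
      have := Real.sin_pos_of_pos_of_lt_pi (x := 2 * Real.pi * (2 * k + 1) / p)
        (by positivity) (by rw [div_lt_iff₀ hp0']; nlinarith [Real.pi_pos])
      linarith
    · apply prod_pos
      intro k hk
      rw [mem_range] at hk
      have hk' : (2 : ℝ) * (2 * (n + 1 + k : ℕ) + 1) < 2 * p := by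
        rw [hp]; exact_mod_cast (by omega)
      have hk'' : (p : ℝ) < (2 : ℝ) * (2 * (n + 1 + k : ℕ) + 1) := by
        rw [hp]; exact_mod_cast (by omega)
      have := Real.sin_pos_of_pos_of_lt_pi
        (x := 2 * Real.pi * (2 * (n + 1 + k : ℕ) + 1) / p - Real.pi)
        (by rw [sub_pos, lt_div_iff₀ hp0']; nlinarith [Real.pi_pos])
        (by rw [sub_lt_iff_lt_add, div_lt_iff₀ hp0']; nlinarith [Real.pi_pos])
      rw [Real.sin_sub_pi] at this
      linarith
  · rw [prod_neg, card_range, show n + 1 + n = 2 * n + 1 by ring, pow_succ, pow_mul, Complex.I_sq]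
    push_cast
    ring

lemma fact_prod (m : ℕ) : m.factorial * ∏ k ∈ range m, (4 * k + 2) = (2 * m).factorial := by
  induction m with
  | zero => simp
  | succ m ih =>
    rw [prod_range_succ, show 2 * (m + 1) = 2 * m + 1 + 1 by ring, Nat.factorial_succ,
      Nat.factorial_succ, Nat.factorial_succ, ← ih]
    ring

open Polynomial in
lemma sum_desc (p m : ℕ) [Fact p.Prime] (hm : p = 2 * m + 1) :
    ∑ j ∈ range p, (j : ZMod p) ^ m * (j.descFactorial m : ZMod p) = -1 := by
  have hm0 : 0 < m := by
    have := (Fact.out : p.Prime).two_le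
    omega
  set R : (ZMod p)[X] := X ^ m * descPochhammer (ZMod p) m with hR
  have hmon : R.Monic := (monic_X_pow m).mul (monic_descPochhammer _ _)
  have hdeg : R.natDegree = p - 1 := by
    rw [hR, (monic_X_pow m).natDegree_mul (monic_descPochhammer _ _), natDegree_X_pow,
      descPochhammer_natDegree]
    omega
  have h1 : ∑ j ∈ range p, (j : ZMod p) ^ m * (j.descFactorial m : ZMod p) =
      ∑ x : ZMod p, R.eval x := by
    refine sum_bij' (fun j _ => (j : ZMod p)) (fun x _ => x.val) ?_ ?_ ?_ ?_ ?_
    · simp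
    · intro x _; simpa using ZMod.val_lt x
    · intro j hj; exact ZMod.val_cast_of_lt (by simpa using hj)
    · intro x _; simp
    · intro j hj
      simp [hR, descPochhammer_eval_eq_descFactorial]
  rw [h1]
  simp_rw [eval_eq_sum_range, hdeg]
  rw [sum_comm]
  simp_rw [← mul_sum]
  rw [sum_range_succ, sum_eq_zero, zero_add]
  · have : R.coeff (p - 1) = 1 := by rw [← hdeg]; exact hmon
    rw [this, one_mul]
    have h2 := FiniteField.sum_pow_units (ZMod p) (p - 1)
    rw [ZMod.card, if_pos dvd_rfl] at h2
    rw [← h2]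
    have h3 : ∑ x : ZMod p, x ^ (p - 1) = ∑ x ∈ univ \ {(0 : ZMod p)}, x ^ (p - 1) := by
      rw [← sum_sdiff (subset_univ {(0 : ZMod p)}), sum_singleton, zero_pow (by omega), add_zero]
    rw [h3]
    symm
    refine sum_bij (fun x _ => (x : ZMod p)) ?_ ?_ ?_ ?_
    · simp
    · intro a _ b _ h; exact Units.ext h
    · intro b hb
      exact ⟨Units.mk0 b (by simpa using hb), by simp⟩
    · simp
  · intro i hi
    rw [FiniteField.sum_pow_lt_card_sub_one, mul_zero]
    rw [ZMod.card]
    simpa using hi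

open Polynomial in
lemma no_neg (p m : ℕ) [Fact p.Prime] (hm : p = 2 * m + 1) (ζ : ℂ) (hζ : IsPrimitiveRoot ζ p)
    (h : ∑ j ∈ range p, (legendreSym p j : ℂ) * ζ ^ j =
      -∏ k ∈ range m, (ζ ^ (2 * k + 1) - ζ ^ (p - (2 * k + 1)))) : False := by
  have hpos : 0 < p := by omega
  have hm0 : 0 < m := by
    have := (Fact.out : p.Prime).two_le
    omega
  set f : ℤ[X] := ∑ j ∈ range p, C (legendreSym p j) * X ^ j +
    ∏ k ∈ range m, (X ^ (2 * k + 1) - X ^ (p - (2 * k + 1))) with hf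
  have h0 : aeval ζ f = 0 := by
    simp only [hf, map_add, map_sum, map_mul, map_prod, map_sub, map_pow, aeval_X, aeval_C]
    simp [h]
  have hd : cyclotomic p ℤ ∣ f := by
    rw [cyclotomic_eq_minpoly hζ hpos]
    exact minpoly.isIntegrallyClosed_dvd (hζ.isIntegral hpos) h0
  have hd2 := Polynomial.map_dvd (Int.castRingHom (ZMod p)) hd
  have hcyc : cyclotomic p (ZMod p) = (X - 1) ^ (p - 1) := by
    have := cyclotomic_mul_prime_eq_pow_of_not_dvd (ZMod p) (p := p) (n := 1)
      (by simpa using (Fact.out : p.Prime).one_lt.ne')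
    simpa using this
  rw [map_cyclotomic, hcyc] at hd2
  obtain ⟨q, hq⟩ := hd2
  have hT := congrArg (fun g => (taylor (1 : ZMod p) g).coeff m) hq
  have hX1 : taylor (1 : ZMod p) (X - 1) = X := by simp
  have hfac : ∀ k ∈ range m, (X ^ (2 * k + 1) - X ^ (p - (2 * k + 1)) : (ZMod p)[X]) =
      (X - 1) * (∑ i ∈ range (2 * k + 1), X ^ i - ∑ i ∈ range (p - (2 * k + 1)), X ^ i) := by
    intro k _
    rw [mul_sub, mul_geom_sum, mul_geom_sum]
    ring
  have hval : ∀ k ∈ range m, ((2 * k + 1 : ℕ) : ZMod p) - ((p - (2 * k + 1) : ℕ) : ZMod p) =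
      ((4 * k + 2 : ℕ) : ZMod p) := by
    intro k hk
    rw [mem_range] at hk
    rw [Nat.cast_sub (by omega)]
    simp
    ring
  have hprod : (taylor (1 : ZMod p) (∏ k ∈ range m,
      (X ^ (2 * k + 1) - X ^ (p - (2 * k + 1))))).coeff m = ∏ k ∈ range m, ((4 * k + 2 : ℕ) : ZMod p) := by
    rw [prod_congr rfl hfac, prod_mul_distrib, prod_const, card_range, taylor_mul, taylor_pow, hX1,
      coeff_X_pow_mul', if_pos le_rfl, Nat.sub_self, taylor_coeff_zero, eval_prod]
    refine prod_congr rfl fun k hk => ?_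
    rw [← hval k hk]
    simp [eval_finsetSum]
  have hsum : (taylor (1 : ZMod p) (∑ j ∈ range p, C ((j : ZMod p) ^ m) * X ^ j)).coeff m =
      ∑ j ∈ range p, (j : ZMod p) ^ m * (j.choose m : ZMod p) := by
    rw [taylor_coeff, map_sum, eval_finsetSum]
    refine sum_congr rfl fun j _ => ?_
    rw [C_mul_X_pow_eq_monomial, hasseDeriv_monomial]
    simp [mul_comm]
  have hmapf : f.map (Int.castRingHom (ZMod p)) = ∑ j ∈ range p, C ((j : ZMod p) ^ m) * X ^ j +
      ∏ k ∈ range m, (X ^ (2 * k + 1) - X ^ (p - (2 * k + 1))) := by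
    rw [hf, Polynomial.map_add, Polynomial.map_sum, Polynomial.map_prod]
    congr 1
    · refine sum_congr rfl fun j _ => ?_
      rw [Polynomial.map_mul, Polynomial.map_pow, map_X, map_C, eq_intCast, legendreSym.eq_pow,
        show p / 2 = m by omega]
      simp
    · simp
  simp only [hmapf, map_add, coeff_add, hprod, hsum, taylor_mul, taylor_pow, hX1] at hT
  rw [coeff_X_pow_mul', if_neg (by omega)] at hT
  have h5 := congrArg (fun x => (m.factorial : ZMod p) * x) hT
  simp only [mul_add, mul_zero, mul_sum] at h5
  have h6 : ∑ j ∈ range p, (m.factorial : ZMod p) * ((j : ZMod p) ^ m * (j.choose m : ZMod p)) = -1 := by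
    rw [← sum_desc p m hm]
    refine sum_congr rfl fun j _ => ?_
    rw [Nat.descFactorial_eq_factorial_mul_choose]
    push_cast
    ring
  have h7 : (m.factorial : ZMod p) * ∏ k ∈ range m, ((4 * k + 2 : ℕ) : ZMod p) = -1 := by
    rw [← Nat.cast_prod, ← Nat.cast_mul, fact_prod, show 2 * m = p - 1 by omega,
      ZMod.wilsons_lemma]
  rw [h6, h7] at h5
  have h8 : ((2 : ℕ) : ZMod p) = 0 := by push_cast; linear_combination -h5
  rw [ZMod.natCast_eq_zero_iff] at h8
  have := Nat.le_of_dvd (by norm_num) h8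
  omega
lemma sum_range_zmod {M : Type*} [AddCommMonoid M] (p : ℕ) [Fact p.Prime] (F : ZMod p → M) :
    ∑ j ∈ range p, F j = ∑ x : ZMod p, F x := by
  refine sum_bij' (fun j _ => (j : ZMod p)) (fun x _ => x.val) ?_ ?_ ?_ ?_ ?_
  · simp
  · intro x _; simpa using ZMod.val_lt x
  · intro j hj; exact ZMod.val_cast_of_lt (by simpa using hj)
  · intro x _; simp
  · intro j hj; rfl

lemma gauss_sign (p n : ℕ) [Fact p.Prime] (hp : p = 4 * n + 3) :
    ∃ G : ℝ, 0 < G ∧ ∀ k : ℕ, ∑ j ∈ range p, (legendreSym p j : ℂ) *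
      (Complex.exp (2 * Real.pi * Complex.I / p) ^ j) ^ k = (legendreSym p k : ℂ) * (Complex.I * G) := by
  have hp0 : p ≠ 0 := by omega
  have hp2 : ringChar (ZMod p) ≠ 2 := by rw [ZMod.ringChar_zmod_n]; omega
  set ζ := Complex.exp (2 * Real.pi * Complex.I / p) with hζd
  have hζ : IsPrimitiveRoot ζ p := Complex.isPrimitiveRoot_exp p hp0
  set χ : MulChar (ZMod p) ℂ := (quadraticChar (ZMod p)).ringHomComp (Int.castRingHom ℂ) with hχ
  have hχv : ∀ j : ℕ, χ (j : ZMod p) = (legendreSym p j : ℂ) := by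
    intro j
    simp [hχ, legendreSym]
  have hψv : ∀ j : ℕ, ZMod.stdAddChar (N := p) (j : ZMod p) = ζ ^ j := by
    intro j
    have := ZMod.stdAddChar_coe (N := p) (j : ℤ)
    rw [Int.cast_natCast] at this
    rw [this, hζd, ← Complex.exp_nat_mul]
    congr 1
    push_cast
    ring
  have hinj : Function.Injective (Int.castRingHom ℂ) := Int.cast_injective
  have hquad : χ.IsQuadratic := (quadraticChar_isQuadratic (ZMod p)).comp _
  have hne : χ ≠ 1 := by
    rw [hχ]
    exact (MulChar.ringHomComp_ne_one_iff hinj).mpr (quadraticChar_ne_one hp2)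
  have hg : ∀ k : ℕ, ∑ j ∈ range p, (legendreSym p j : ℂ) * (ζ ^ j) ^ k =
      gaussSum χ (ZMod.stdAddChar.mulShift (k : ZMod p)) := by
    intro k
    rw [gaussSum, ← sum_range_zmod]
    refine sum_congr rfl fun j _ => ?_
    rw [hχv, AddChar.mulShift_apply, ← Nat.cast_mul, hψv, ← pow_mul, mul_comm j k]
  have hgk : ∀ k : ℕ, gaussSum χ (ZMod.stdAddChar.mulShift (k : ZMod p)) =
      (legendreSym p k : ℂ) * gaussSum χ ZMod.stdAddChar := by
    intro k
    by_cases hk : (k : ZMod p) = 0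
    · rw [← hχv, hk, AddChar.mulShift_zero, MulChar.map_zero, zero_mul, gaussSum]
      simp [MulChar.sum_eq_zero_of_ne_one hne]
    · have := gaussSum_mulShift_eq χ ZMod.stdAddChar (Units.mk0 _ hk)
      rw [hquad.inv] at this
      rw [← hχv]
      simpa using this
  have hsq : gaussSum χ (ZMod.stdAddChar (N := p)) ^ 2 = -p := by
    rw [gaussSum_sq hne hquad (ZMod.isPrimitive_stdAddChar p), ZMod.card]
    have : χ (-1) = -1 := by
      have h1 : legendreSym p (-1) = -1 := by
        rw [legendreSym.at_neg_one (by omega), ZMod.χ₄_nat_three_mod_four (by omega)]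
      simp only [legendreSym] at h1
      simp only [hχ, MulChar.ringHomComp_apply]
      rw [show ((-1 : ℤ) : ZMod p) = -1 by simp] at h1
      rw [h1]; simp
    rw [this]; ring
  obtain ⟨u, hu, hP⟩ := P_im p n hp
  have hPsq := P_sq p (2 * n + 1) (by omega) ζ hζ
  have hno := no_neg p (2 * n + 1) (by omega) ζ hζ
  have hg1 := hg 1
  simp only [pow_one, Nat.cast_one, AddChar.mulShift_one] at hg1
  rw [hg1] at hno
  rw [hP] at hno hPsq
  have h3 : (gaussSum χ (ZMod.stdAddChar (N := p)) - Complex.I * u) *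
      (gaussSum χ (ZMod.stdAddChar (N := p)) + Complex.I * u) = 0 := by
    rw [pow_succ (-1 : ℂ), pow_mul (-1 : ℂ), neg_one_sq, one_pow] at hPsq
    linear_combination hsq - hPsq
  refine ⟨u, hu, fun k => ?_⟩
  rw [hg, hgk]
  rcases mul_eq_zero.mp h3 with h | h
  · rw [sub_eq_zero.mp h]
  · exact (hno (eq_neg_of_add_eq_zero_left h)).elim

lemma leg_sum_zero (p : ℕ) [Fact p.Prime] (hp : p ≠ 2) :
    ∑ j ∈ range p, legendreSym p j = 0 := by
  have hp2 : ringChar (ZMod p) ≠ 2 := by rwa [ZMod.ringChar_zmod_n]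
  have := quadraticChar_sum_zero hp2
  rw [← sum_range_zmod] at this
  simpa [legendreSym] using this

lemma leg_abs_le (p : ℕ) [Fact p.Prime] (j : ℤ) : |(legendreSym p j : ℝ)| ≤ 1 := by
  by_cases h : (j : ZMod p) = 0
  · rw [(legendreSym.eq_zero_iff p j).mpr h]; simp
  · rcases legendreSym.eq_one_or_neg_one p h with h | h <;> rw [h] <;> simp

lemma leg_partial (p : ℕ) [Fact p.Prime] (hp : p ≠ 2) (n : ℕ) :
    |∑ j ∈ range n, (legendreSym p j : ℝ)| ≤ p := by
  induction n using Nat.strong_induction_on with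
  | _ n ih =>
    by_cases h : n < p
    · refine (abs_sum_le_sum_abs _ _).trans ?_
      refine (sum_le_sum fun (j : ℕ) _ => leg_abs_le p (j : ℤ)).trans ?_
      simp only [sum_const, card_range, nsmul_eq_mul, mul_one]
      exact_mod_cast h.le
    · obtain ⟨k, rfl⟩ := Nat.exists_eq_add_of_le (not_lt.mp h)
      have hpos := (Fact.out : p.Prime).pos
      rw [sum_range_add]
      have h0 := leg_sum_zero p hp
      have h0' : ∑ j ∈ range p, (legendreSym p j : ℝ) = 0 := by exact_mod_cast h0
      rw [h0', zero_add]
      have : ∀ j : ℕ, legendreSym p ((p + j : ℕ) : ℤ) = legendreSym p j := by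
        intro j
        simp [legendreSym]
      simp_rw [this]
      exact ih k (by omega)

lemma abel_bound (d g : ℕ → ℝ) (D : ℝ) (hd : ∀ n, |∑ i ∈ range n, d i| ≤ D)
    (hg : Antitone g) (hg0 : ∀ n, 0 ≤ g n) (M : ℕ) :
    |∑ i ∈ range M, d i * g i| ≤ D * g 0 := by
  have h1 : ∀ M, ∑ i ∈ range M, d i * g i = (∑ i ∈ range M, d i) * g M +
      ∑ i ∈ range M, (∑ l ∈ range (i + 1), d l) * (g i - g (i + 1)) := by
    intro M
    induction M with
    | zero => simp
    | succ M ih =>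
      rw [sum_range_succ, ih, sum_range_succ (fun i => (∑ l ∈ range (i + 1), d l) * (g i - g (i + 1))),
        sum_range_succ d]
      ring
  rw [h1]
  have h2 : |∑ i ∈ range M, (∑ l ∈ range (i + 1), d l) * (g i - g (i + 1))| ≤
      D * (g 0 - g M) := by
    refine (abs_sum_le_sum_abs _ _).trans ?_
    have : ∀ i ∈ range M, |(∑ l ∈ range (i + 1), d l) * (g i - g (i + 1))| ≤
        D * (g i - g (i + 1)) := by
      intro i _
      have h0 : 0 ≤ g i - g (i + 1) := sub_nonneg.mpr (hg (Nat.le_succ i))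
      rw [abs_mul, abs_of_nonneg h0]
      exact mul_le_mul_of_nonneg_right (hd _) h0
    refine (sum_le_sum this).trans ?_
    rw [← mul_sum, sum_range_sub']
  refine (abs_add_le _ _).trans ?_
  rw [abs_mul, abs_of_nonneg (hg0 M)]
  have := mul_le_mul_of_nonneg_right (hd M) (hg0 M)
  linarith

lemma tail_bound (c f : ℕ → ℝ) (C S : ℝ) (N : ℕ) (hc : ∀ n, |∑ i ∈ range n, c i| ≤ C)
    (hf : ∀ a b, N ≤ a → a ≤ b → f b ≤ f a) (hf0 : ∀ n, 0 ≤ f n)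
    (hS : HasSum (fun n => c n * f n) S) :
    |S - ∑ i ∈ range N, c i * f i| ≤ 2 * C * f N := by
  have h1 : ∀ M, |∑ i ∈ range M, c (N + i) * f (N + i)| ≤ 2 * C * f (N + 0) := by
    intro M
    apply abel_bound (fun i => c (N + i)) (fun i => f (N + i)) (2 * C)
    · intro n
      have : ∑ i ∈ range n, c (N + i) = ∑ i ∈ range (N + n), c i - ∑ i ∈ range N, c i := by
        rw [sum_range_add]; ring
      rw [this]
      refine (abs_sub _ _).trans ?_
      linarith [hc (N + n), hc N]
    · intro a b hab
      exact hf _ _ (by omega) (by omega)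
    · intro n; exact hf0 _
  have h2 : Filter.Tendsto (fun M => |∑ i ∈ range (N + M), c i * f i - ∑ i ∈ range N, c i * f i|)
      Filter.atTop (nhds |S - ∑ i ∈ range N, c i * f i|) := by
    apply Filter.Tendsto.abs
    apply Filter.Tendsto.sub_const
    have := hS.tendsto_sum_nat
    exact this.comp (Filter.tendsto_atTop_mono (fun n => Nat.le_add_left n N) Filter.tendsto_id)
  refine le_of_tendsto h2 (Filter.Eventually.of_forall fun M => ?_)
  rw [sum_range_add, add_sub_cancel_left]
  exact h1 M
open Filter Topology in
lemma A_N_bound (p : ℕ) [Fact p.Prime] (hp : p ≠ 2) (N : ℕ) (hN : 1 ≤ N) :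
    -(2 * (p : ℝ) * (1 / N)) ≤ ∑ i ∈ range N, (legendreSym p i : ℝ) * (1 / i) := by
  have hN0 : (1 : ℝ) ≤ N := by exact_mod_cast hN
  have h1 : ∀ s : ℝ, 1 < s →
      -(2 * (p : ℝ) * (N : ℝ) ^ (-s)) ≤ ∑ i ∈ range N, (legendreSym p i : ℝ) * (i : ℝ) ^ (-s) := by
    intro s hs
    let f : ℕ →*₀ ℝ :=
      { toFun := fun n => (legendreSym p n : ℝ) * (n : ℝ) ^ (-s)
        map_zero' := by simp
        map_one' := by simp
        map_mul' := by
          intro a b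
          rw [Nat.cast_mul, Nat.cast_mul, legendreSym.mul, Real.mul_rpow (by positivity) (by positivity)]
          push_cast
          ring }
    have hfv : ∀ n, f n = (legendreSym p n : ℝ) * (n : ℝ) ^ (-s) := fun n => rfl
    have hle : ∀ n, ‖f n‖ ≤ (n : ℝ) ^ (-s) := by
      intro n
      have h0 : (0 : ℝ) ≤ (n : ℝ) ^ (-s) := by positivity
      rw [hfv, Real.norm_eq_abs, abs_mul, abs_of_nonneg h0]
      exact mul_le_of_le_one_left h0 (leg_abs_le p n)
    have hsum : Summable (fun n => ‖f n‖) :=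
      Summable.of_nonneg_of_le (fun _ => norm_nonneg _) hle
        (Real.summable_nat_rpow.mpr (by linarith))
    have hE := EulerProduct.eulerProduct_completely_multiplicative hsum
    have hpos : 0 ≤ ∑' n, f n := by
      refine ge_of_tendsto hE (Eventually.of_forall fun n => prod_nonneg fun q hq => ?_)
      rw [Nat.mem_primesBelow] at hq
      have h2 := hle q
      have h3 : (q : ℝ) ^ (-s) ≤ 1 :=
        Real.rpow_le_one_of_one_le_of_nonpos (by exact_mod_cast hq.2.one_lt.le) (by linarith)
      have h4 := (abs_le.mp (h2.trans h3)).2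
      rw [inv_nonneg]
      linarith
    have hS : HasSum (fun n : ℕ => (legendreSym p n : ℝ) * (n : ℝ) ^ (-s)) (∑' n, f n) :=
      hsum.of_norm.hasSum
    have := tail_bound (fun n => (legendreSym p n : ℝ)) (fun n => (n : ℝ) ^ (-s)) p _ N
      (leg_partial p hp) (fun a b ha hab => Real.rpow_le_rpow_of_nonpos
        (by exact_mod_cast (by omega)) (by exact_mod_cast hab) (by linarith))
      (fun n => by positivity) hS
    have := (abs_le.mp this).2
    linarith
  have hc : ∀ i : ℕ, Tendsto (fun s : ℝ => (i : ℝ) ^ (-s)) (𝓝[>] 1) (𝓝 (1 / (i : ℝ))) := by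
    intro i
    rcases Nat.eq_zero_or_pos i with rfl | hi
    · apply tendsto_const_nhds.congr'
      filter_upwards [self_mem_nhdsWithin] with s hs
      have : (1 : ℝ) < s := hs
      simp [Real.zero_rpow (by linarith : -s ≠ 0)]
    · have h5 : ContinuousAt (fun s : ℝ => (i : ℝ) ^ (-s)) 1 := by
        apply ContinuousAt.rpow continuousAt_const continuousAt_neg
        left
        simpa using hi.ne'
      have h6 : Tendsto (fun s : ℝ => (i : ℝ) ^ (-s)) (𝓝 1) (𝓝 ((i : ℝ) ^ (-1 : ℝ))) := h5
      rw [Real.rpow_neg_one, ← one_div] at h6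
      exact h6.mono_left nhdsWithin_le_nhds
  have hL : Tendsto (fun s : ℝ => -(2 * (p : ℝ) * (N : ℝ) ^ (-s))) (𝓝[>] 1)
      (𝓝 (-(2 * (p : ℝ) * (1 / N)))) := ((hc N).const_mul _).neg
  have hR : Tendsto (fun s : ℝ => ∑ i ∈ range N, (legendreSym p i : ℝ) * (i : ℝ) ^ (-s)) (𝓝[>] 1)
      (𝓝 (∑ i ∈ range N, (legendreSym p i : ℝ) * (1 / i))) :=
    tendsto_finsetSum _ fun i _ => (hc i).const_mul _
  refine le_of_tendsto_of_tendsto hL hR ?_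
  filter_upwards [self_mem_nhdsWithin] with s hs
  exact h1 s hs

lemma arg_formula (p j : ℕ) (hj : 0 < j) (hjp : j < p) :
    Complex.arg (1 - Complex.exp (2 * Real.pi * Complex.I / p) ^ j) =
      Real.pi * (j / p) - Real.pi / 2 ∧
    0 < (1 - Complex.exp (2 * Real.pi * Complex.I / p) ^ j).re := by
  have hp : (0 : ℝ) < p := by exact_mod_cast (by omega)
  have hp' : (p : ℂ) ≠ 0 := Nat.cast_ne_zero.mpr (by omega)
  have hj' : (0 : ℝ) < j := by exact_mod_cast hj
  set t : ℝ := Real.pi * (j / p) with ht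
  have hq : (j : ℝ) / p < 1 := by rw [div_lt_one hp]; exact_mod_cast hjp
  have ht0 : 0 < t := by positivity
  have ht1 : t < Real.pi := by nlinarith [Real.pi_pos]
  have hs : 0 < Real.sin t := Real.sin_pos_of_pos_of_lt_pi ht0 ht1
  have e : Complex.exp (2 * Real.pi * Complex.I / p) ^ j =
      Complex.exp (((2 * t : ℝ) : ℂ) * Complex.I) := by
    rw [← Complex.exp_nat_mul, ht]
    congr 1
    push_cast
    field_simp
  have e2 : 1 - Complex.exp (2 * Real.pi * Complex.I / p) ^ j =
      ((2 * Real.sin t : ℝ) : ℂ) * (Complex.cos ((t - Real.pi / 2 : ℝ) : ℂ) +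
        Complex.sin ((t - Real.pi / 2 : ℝ) : ℂ) * Complex.I) := by
    rw [e, Complex.exp_mul_I, ← Complex.ofReal_cos, ← Complex.ofReal_sin, ← Complex.ofReal_cos,
      ← Complex.ofReal_sin, Real.cos_sub_pi_div_two, Real.sin_sub_pi_div_two, Real.sin_two_mul,
      Real.cos_two_mul']
    have h1 := Real.sin_sq_add_cos_sq t
    have h2 : Real.cos t ^ 2 = 1 - Real.sin t ^ 2 := by linarith
    rw [h2]
    push_cast
    ring
  rw [e2]
  constructor
  · rw [Complex.arg_mul_cos_add_sin_mul_I (by positivity)]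
    constructor <;> linarith
  · rw [← Complex.ofReal_cos, ← Complex.ofReal_sin, Complex.re_ofReal_mul, Complex.add_re,
      Complex.ofReal_re, Complex.re_ofReal_mul, Complex.I_re, mul_zero, add_zero,
      Real.cos_sub_pi_div_two]
    positivity

open Filter Topology in
lemma T_nonpos (p n : ℕ) [Fact p.Prime] (hp : p = 4 * n + 3) :
    ∑ j ∈ range p, (legendreSym p j : ℝ) * j ≤ 0 := by
  obtain ⟨G, hG, hgauss⟩ := gauss_sign p n hp
  set ζ := Complex.exp (2 * Real.pi * Complex.I / p) with hζd
  have hp0 : (0 : ℝ) < p := by exact_mod_cast (by omega)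
  have hnorm : ‖ζ‖ = 1 := (Complex.isPrimitiveRoot_exp p (by omega)).norm'_eq_one (by omega)
  set F : ℝ → ℝ := fun r => ∑ j ∈ range p, (legendreSym p j : ℝ) *
    (-Complex.arg (1 - r * ζ ^ j)) with hF
  have hsum : ∀ r : ℝ, 0 < r → r < 1 →
      HasSum (fun k : ℕ => (legendreSym p k : ℝ) * (r ^ k / k)) (F r / G) := by
    intro r hr0 hr1
    have h1 : HasSum (fun k : ℕ => ∑ j ∈ range p, (legendreSym p j : ℂ) *
        ((r * ζ ^ j) ^ k / k)) (∑ j ∈ range p, (legendreSym p j : ℂ) *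
          (-Complex.log (1 - r * ζ ^ j))) := by
      apply hasSum_sum
      intro j _
      apply HasSum.mul_left
      apply Complex.hasSum_taylorSeries_neg_log
      rw [norm_mul, norm_pow, hnorm, one_pow, mul_one, Complex.norm_real, Real.norm_eq_abs,
        abs_of_pos hr0]
      exact hr1
    have h2 := Complex.hasSum_im h1
    have h3 : ∀ k : ℕ, (∑ j ∈ range p, (legendreSym p j : ℂ) * ((r * ζ ^ j) ^ k / k)).im =
        (legendreSym p k : ℝ) * (r ^ k / k) * G := by
      intro k
      have : ∑ j ∈ range p, (legendreSym p j : ℂ) * ((r * ζ ^ j) ^ k / k) =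
          (((legendreSym p k : ℝ) * (r ^ k / k) * G : ℝ) : ℂ) * Complex.I := by
        have e := hgauss k
        calc _ = (∑ j ∈ range p, (legendreSym p j : ℂ) * (ζ ^ j) ^ k) * (r ^ k / k) := by
              rw [sum_mul]
              refine sum_congr rfl fun j _ => ?_
              rw [mul_pow]; ring
          _ = _ := by
              rw [e]; push_cast; ring
      rw [this, Complex.im_ofReal_mul, Complex.I_im, mul_one]
    have h4 : (∑ j ∈ range p, (legendreSym p j : ℂ) * (-Complex.log (1 - r * ζ ^ j))).im = F r := by
      rw [Complex.im_sum]
      refine sum_congr rfl fun j _ => ?_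
      rw [← Complex.ofReal_intCast, Complex.im_ofReal_mul, Complex.neg_im, Complex.log_im]
    rw [h4] at h2
    simp_rw [h3] at h2
    have h5 := h2.div_const G
    simp_rw [mul_div_cancel_right₀ _ hG.ne'] at h5
    exact h5
  have hlim : Tendsto (fun r => F r / G) (𝓝[<] 1) (𝓝 (F 1 / G)) := by
    apply Tendsto.div_const
    apply tendsto_finsetSum
    intro j hj
    rw [mem_range] at hj
    rcases Nat.eq_zero_or_pos j with rfl | hj0
    · simp
    · apply Tendsto.const_mul
      apply Tendsto.neg
      have h1 : ContinuousAt (fun r : ℝ => Complex.arg (1 - r * ζ ^ j)) 1 := by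
        have h2 : ContinuousAt (fun r : ℝ => (1 - r * ζ ^ j : ℂ)) 1 := by fun_prop
        refine ContinuousAt.comp (f := fun r : ℝ => (1 - r * ζ ^ j : ℂ)) (g := Complex.arg) ?_ h2
        apply Complex.continuousAt_arg
        left
        simpa using (arg_formula p j hj0 hj).2
      exact h1.tendsto.mono_left nhdsWithin_le_nhds
  have hkey : ∀ N : ℕ, 1 ≤ N → -(4 * (p : ℝ) * (1 / N)) ≤ F 1 / G := by
    intro N hN
    have hN0 : (0 : ℝ) < N := by exact_mod_cast hN
    have hA := A_N_bound p (by omega) N hN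
    have hB : ∀ r : ℝ, 0 < r → r < 1 →
        ∑ i ∈ range N, (legendreSym p i : ℝ) * (r ^ i / i) - 2 * p * (r ^ N / N) ≤ F r / G := by
      intro r hr0 hr1
      have := tail_bound (fun n => (legendreSym p n : ℝ)) (fun n => r ^ n / n) p _ N
        (leg_partial p (by omega)) (fun a b ha hab => by
          have ha0 : (0 : ℝ) < a := by exact_mod_cast (by omega)
          exact div_le_div₀ (by positivity) (pow_le_pow_of_le_one hr0.le hr1.le hab) ha0
            (by exact_mod_cast hab))
        (fun n => by positivity) (hsum r hr0 hr1)
      have := (abs_le.mp this).1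
      linarith
    have hC : Tendsto (fun r : ℝ => ∑ i ∈ range N, (legendreSym p i : ℝ) * (r ^ i / i) -
        2 * p * (r ^ N / N)) (𝓝[<] 1) (𝓝 (∑ i ∈ range N, (legendreSym p i : ℝ) * (1 ^ i / i) -
        2 * p * (1 ^ N / N))) := by
      have : Continuous (fun r : ℝ => ∑ i ∈ range N, (legendreSym p i : ℝ) * (r ^ i / i) -
        2 * p * (r ^ N / N)) := by fun_prop
      exact (this.tendsto 1).mono_left nhdsWithin_le_nhds
    have hD := le_of_tendsto_of_tendsto hC hlim (by
      filter_upwards [Ioo_mem_nhdsLT (show (0 : ℝ) < 1 by norm_num)] with r hr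
      exact hB r hr.1 hr.2)
    simp only [one_pow] at hD
    linarith
  have hF1 : 0 ≤ F 1 / G := by
    have h1 : Tendsto (fun N : ℕ => -(4 * (p : ℝ) * (1 / N))) atTop (𝓝 (-(4 * (p : ℝ) * 0))) :=
      ((tendsto_one_div_atTop_nhds_zero_nat).const_mul _).neg
    rw [mul_zero, neg_zero] at h1
    refine le_of_tendsto h1 ?_
    filter_upwards [eventually_ge_atTop 1] with N hN
    exact hkey N hN
  have hF2 : 0 ≤ F 1 := by
    have := mul_nonneg hF1 hG.le
    rwa [div_mul_cancel₀ _ hG.ne'] at this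
  have hF3 : F 1 = -(Real.pi / p) * ∑ j ∈ range p, (legendreSym p j : ℝ) * j +
      Real.pi / 2 * ∑ j ∈ range p, (legendreSym p j : ℝ) := by
    rw [mul_sum, mul_sum, ← sum_add_distrib]
    refine sum_congr rfl fun j hj => ?_
    rw [mem_range] at hj
    rcases Nat.eq_zero_or_pos j with rfl | hj0
    · simp
    · rw [Complex.ofReal_one, one_mul, (arg_formula p j hj0 hj).1]
      ring
  have h0 : ∑ j ∈ range p, (legendreSym p j : ℝ) = 0 := by
    exact_mod_cast leg_sum_zero p (by omega)
  rw [hF3, h0, mul_zero, add_zero] at hF2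
  have : 0 < Real.pi / p := by positivity
  nlinarith

lemma sum_pairs_leg (f : ℕ → ℤ) (m : ℕ) :
    ∑ i ∈ range (2 * m), f (i + 1) = ∑ k ∈ range m, (f (2 * k + 1) + f (2 * k + 2)) := by
  induction m with
  | zero => simp
  | succ m ih =>
    rw [show 2 * (m + 1) = 2 * m + 1 + 1 by ring, sum_range_succ, sum_range_succ, ih,
      sum_range_succ, add_assoc]

lemma reflect_odd (f : ℕ → ℤ) (p m : ℕ) (hm : p = 2 * m + 1) :
    ∑ k ∈ range m, f (2 * k + 1) = ∑ k ∈ range m, f (p - (2 * k + 2)) := by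
  rw [← sum_range_reflect]
  refine sum_congr rfl fun k hk => ?_
  rw [mem_range] at hk
  congr 1
  omega

lemma reflect_half (f : ℕ → ℤ) (p m : ℕ) (hm : p = 2 * m + 1) :
    ∑ i ∈ range (2 * m), f (i + 1) = ∑ k ∈ range m, (f (k + 1) + f (p - (k + 1))) := by
  rw [show 2 * m = m + m by ring, sum_range_add, sum_add_distrib]
  congr 1
  rw [← sum_range_reflect]
  refine sum_congr rfl fun k hk => ?_
  rw [mem_range] at hk
  congr 1
  omega

lemma leg_neg (p j : ℕ) [Fact p.Prime] (h3 : p % 4 = 3) (hj : j ≤ p) :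
    legendreSym p ((p - j : ℕ) : ℤ) = -legendreSym p j := by
  have h1 : legendreSym p (-1) = -1 := by
    rw [legendreSym.at_neg_one (by omega), ZMod.χ₄_nat_three_mod_four h3]
  have h2 : legendreSym p ((p - j : ℕ) : ℤ) = legendreSym p (-1 * j) := by
    simp only [legendreSym]
    congr 1
    rw [Nat.cast_sub hj]
    simp
  rw [h2, legendreSym.mul, h1]
  ring

lemma leg_two (p k : ℕ) [Fact p.Prime] :
    legendreSym p ((2 * k + 2 : ℕ) : ℤ) = legendreSym p 2 * legendreSym p ((k + 1 : ℕ) : ℤ) := by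
  rw [← legendreSym.mul]
  congr 1

lemma T_eq (p m : ℕ) [Fact p.Prime] (hm : p = 2 * m + 1) (h3 : p % 4 = 3) :
    (legendreSym p 2 - 2) * ∑ j ∈ range p, legendreSym p j * (j : ℤ) =
      p * ∑ k ∈ range m, legendreSym p ((k + 1 : ℕ) : ℤ) := by
  set f : ℕ → ℤ := fun j => legendreSym p j * (j : ℤ) with hf
  have h0 : ∑ j ∈ range p, f j = ∑ i ∈ range (2 * m), f (i + 1) := by
    rw [hm, sum_range_succ']
    simp [hf]
  set H := ∑ k ∈ range m, legendreSym p ((k + 1 : ℕ) : ℤ) with hH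
  set A := ∑ k ∈ range m, legendreSym p ((k + 1 : ℕ) : ℤ) * ((k + 1 : ℕ) : ℤ) with hA
  have h1 : ∑ j ∈ range p, f j = 2 * A - p * H := by
    rw [h0, reflect_half f p m hm, hA, hH, mul_sum, mul_sum, ← sum_sub_distrib]
    refine sum_congr rfl fun k hk => ?_
    rw [mem_range] at hk
    simp only [hf]
    rw [leg_neg p (k + 1) h3 (by omega), Nat.cast_sub (by omega)]
    ring
  have h2 : ∑ j ∈ range p, f j = legendreSym p 2 * (4 * A - p * H) := by
    rw [h0, sum_pairs_leg, sum_add_distrib, reflect_odd f p m hm, ← sum_add_distrib, hA, hH,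
      mul_sum, mul_sum, ← sum_sub_distrib, mul_sum]
    refine sum_congr rfl fun k hk => ?_
    rw [mem_range] at hk
    simp only [hf]
    rw [leg_neg p (2 * k + 2) h3 (by omega), Nat.cast_sub (by omega), leg_two]
    push_cast
    ring
  have h4 : legendreSym p 2 * legendreSym p 2 = 1 := by
    have : ((2 : ℤ) : ZMod p) ≠ 0 := by
      intro h
      have h' : ((2 : ℕ) : ZMod p) = 0 := by exact_mod_cast h
      rw [ZMod.natCast_eq_zero_iff] at h'
      have := Nat.le_of_dvd (by norm_num) h'
      omega
    have := legendreSym.sq_one p this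
    rwa [sq] at this
  change (legendreSym p 2 - 2) * ∑ j ∈ range p, f j = p * H
  linear_combination legendreSym p 2 * h2 - 2 * h1 + (4 * A - p * H) * h4

lemma qr_iff (p k : ℕ) [Fact p.Prime] (hk : 0 < k) (hkp : k < p) :
    (∃ x ∈ range p, x * x % p = k % p) ↔ legendreSym p k = 1 := by
  have hk0 : ((k : ℤ) : ZMod p) ≠ 0 := by
    rw [Int.cast_natCast, Ne, ZMod.natCast_eq_zero_iff]
    exact fun h => absurd (Nat.le_of_dvd hk h) (by omega)
  rw [legendreSym.eq_one_iff p hk0, Int.cast_natCast]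
  constructor
  · rintro ⟨x, _, hx⟩
    refine ⟨(x : ZMod p), ?_⟩
    rw [← Nat.cast_mul]
    exact ((ZMod.natCast_eq_natCast_iff' _ _ _).mpr hx).symm
  · rintro ⟨y, hy⟩
    refine ⟨y.val, by simpa using ZMod.val_lt y, ?_⟩
    rw [← ZMod.natCast_eq_natCast_iff']
    simp [hy]

lemma leg_ind (p k : ℕ) [Fact p.Prime] (hk : 0 < k) (hkp : k < p) :
    2 * (if legendreSym p k = 1 then (1 : ℤ) else 0) = 1 + legendreSym p k := by
  have hk0 : ((k : ℤ) : ZMod p) ≠ 0 := by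
    rw [Int.cast_natCast, Ne, ZMod.natCast_eq_zero_iff]
    exact fun h => absurd (Nat.le_of_dvd hk h) (by omega)
  rcases legendreSym.eq_one_or_neg_one p hk0 with h | h <;> simp [h]

lemma count_eq (p m : ℕ) [Fact p.Prime] (hm : p = 2 * m + 1) (Q : ℕ → Prop) [DecidablePred Q] :
    2 * ((((Icc 1 (p - 1)).filter
      (fun k => Q k ∧ ∃ x ∈ range p, x * x % p = k % p)).card : ℕ) : ℤ) =
    ∑ i ∈ range (2 * m), if Q (i + 1) then 1 + legendreSym p ((i + 1 : ℕ) : ℤ) else 0 := by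
  have h1 : Icc 1 (p - 1) = (range (2 * m)).map (addRightEmbedding 1) := by
    ext x
    simp only [mem_Icc, mem_map, mem_range, addRightEmbedding_apply]
    constructor
    · rintro ⟨h1, h2⟩
      exact ⟨x - 1, by omega, by omega⟩
    · rintro ⟨a, ha, rfl⟩
      omega
  rw [card_filter, h1, sum_map]
  push_cast
  rw [mul_sum]
  refine sum_congr rfl fun i hi => ?_
  rw [mem_range] at hi
  have h2 := qr_iff p (i + 1) (by omega) (by omega)
  have h3 := leg_ind p (i + 1) (by omega) (by omega)
  simp only [addRightEmbedding_apply, h2]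
  by_cases hQ : Q (i + 1)
  · simp only [hQ, true_and, if_true]
    exact_mod_cast h3
  · simp [hQ]

lemma qe_sub_qo (p m : ℕ) [Fact p.Prime] (hm : p = 2 * m + 1) (h3 : p % 4 = 3) :
    (qe p : ℤ) - qo p = legendreSym p 2 * ∑ k ∈ range m, legendreSym p ((k + 1 : ℕ) : ℤ) := by
  have he := count_eq p m hm Even
  have ho := count_eq p m hm Odd
  rw [sum_pairs_leg (fun j => if Even j then 1 + legendreSym p (j : ℤ) else 0)] at he
  rw [sum_pairs_leg (fun j => if Odd j then 1 + legendreSym p (j : ℤ) else 0)] at ho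
  have e1 : ∀ k, Even (2 * k + 2) := fun k => ⟨k + 1, by ring⟩
  have e2 : ∀ k, ¬ Even (2 * k + 1) := fun k => by simp
  have o1 : ∀ k, Odd (2 * k + 1) := fun k => ⟨k, rfl⟩
  have o2 : ∀ k, ¬ Odd (2 * k + 2) := fun k => by simpa using e1 k
  simp only [e1, e2, o1, o2, if_true, if_false, zero_add, add_zero] at he ho
  rw [reflect_odd (fun j => 1 + legendreSym p (j : ℤ)) p m hm] at ho
  have ho' : ∑ k ∈ range m, (1 + legendreSym p ((p - (2 * k + 2) : ℕ) : ℤ)) =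
      ∑ k ∈ range m, (1 - legendreSym p ((2 * k + 2 : ℕ) : ℤ)) := by
    refine sum_congr rfl fun k hk => ?_
    rw [mem_range] at hk
    rw [leg_neg p (2 * k + 2) h3 (by omega)]
    ring
  rw [ho'] at ho
  have hfin : 2 * ((qe p : ℤ) - qo p) =
      2 * (legendreSym p 2 * ∑ k ∈ range m, legendreSym p ((k + 1 : ℕ) : ℤ)) := by
    rw [mul_sub]
    unfold qe qo
    rw [he, ho, ← sum_sub_distrib, mul_sum, mul_sum]
    refine sum_congr rfl fun k _ => ?_
    rw [leg_two]
    ring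
  linarith

lemma H_pos (p m : ℕ) [Fact p.Prime] (hm : p = 2 * m + 1) (h3 : p % 4 = 3) :
    0 < ∑ k ∈ range m, legendreSym p ((k + 1 : ℕ) : ℤ) := by
  have hT := T_nonpos p (p / 4) (by omega)
  have hT' : ∑ j ∈ range p, legendreSym p j * (j : ℤ) ≤ 0 := by exact_mod_cast hT
  have hE := T_eq p m hm h3
  set H := ∑ k ∈ range m, legendreSym p ((k + 1 : ℕ) : ℤ) with hH
  have h2 : legendreSym p 2 - 2 ≤ 0 := by
    have := (abs_le.mp (leg_abs_le p 2)).2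
    have : legendreSym p 2 ≤ 1 := by exact_mod_cast this
    linarith
  have h4 : 0 ≤ (p : ℤ) * H := by
    rw [← hE]
    exact mul_nonneg_of_nonpos_of_nonpos h2 hT'
  have hp0 : (0 : ℤ) < p := by exact_mod_cast (by omega)
  have h5 : 0 ≤ H := nonneg_of_mul_nonneg_right h4 hp0
  have h6 : (2 : ℤ) ∣ H + m := by
    have : H + m = ∑ k ∈ range m, (1 + legendreSym p ((k + 1 : ℕ) : ℤ)) := by
      rw [sum_add_distrib, hH]; simp [add_comm]
    rw [this]
    refine dvd_sum fun k hk => ?_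
    rw [mem_range] at hk
    rw [← leg_ind p (k + 1) (by omega) (by omega)]
    exact dvd_mul_right _ _
  omega

theorem qo_qe_comparison (p : ℕ) (hp : p.Prime) (h3 : p % 4 = 3) :
    (p % 8 = 3 → qo p > qe p) ∧ (p % 8 = 7 → qe p > qo p) := by
  have : Fact p.Prime := ⟨hp⟩
  have hm : p = 2 * (p / 2) + 1 := by omega
  have h1 := qe_sub_qo p (p / 2) hm h3
  have h2 := H_pos p (p / 2) hm h3
  have h4 : legendreSym p 2 = ZMod.χ₈ p := legendreSym.at_two (by omega)
  rw [ZMod.χ₈_nat_eq_if_mod_eight] at h4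
  constructor
  · intro h8
    rw [if_neg (by omega), if_neg (by omega)] at h4
    rw [h4] at h1
    omega
  · intro h8
    rw [if_neg (by omega), if_pos (by omega)] at h4
    rw [h4] at h1
    omega
end
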